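/- For every fixed integer d ≥ 1, as the integer b → ∞ (with b > d), I(b,d,1) = b·log b + a₁/b + a₂/b² + a₃/b³ + a₄/b⁴ + a₅/b⁵ + O(b⁻⁶), where: a₁ = (d + 1/2)/d²; a₂ = −(9d² + 8d + 2)/(6d³(d+1)); a₃ = (d + 1/2)ζ(2) + (d + 1/2)(2d³ + 4d² + 4d + 1)/(2d⁴(d+1)²); a₄ = −(2d+1)d·ζ(3) + (d + 1/2)ζ(2) − (60d⁷ + 180d⁶ + 350d⁵ + 585d⁴ + 597d³ + 331d² + 96d + 12)/(60d⁵(d+1)³); a₅ = 3(d + 1/2)d²ζ(4) − (3d² + 3d + 5/6)ζ(3) − (d + 1/2)ζ(2) − (12d⁸ − 24d⁷ − 216d⁶ − 387d⁵ − 339d⁴ − 186d³ − 72d² − 18d − 2)/(12d⁶(d+1)³). -/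

import Mathlib

open Filter Asymptotics

/-- The Irwin harmonic sum `I(b,d,k)`: sum of `1/m` over positive integers `m`
whose base-`b` digit list contains the digit `d` exactly `k` times. -/
noncomputable def irwinSum (b d k : ℕ) : ℝ :=
  ∑' m : ℕ, if 0 < m ∧ (Nat.digits b m).count d = k then (1 : ℝ) / m else 0

/-- `ζ(s) = ∑_{n ≥ 1} n^{-s}` for an integer exponent. -/
noncomputable def zetaR (s : ℕ) : ℝ := ∑' n : ℕ, 1 / ((n : ℝ) + 1) ^ s

namespace Irw

/-- averaging operator over the digits other than `d` -/
noncomputable def P (b d : ℕ) (f : ℝ → ℝ) : ℝ → ℝ :=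
  fun x => (1 / (b : ℝ)) * ∑ a ∈ (Finset.range b).erase d, f (((a : ℝ) + x) / b)

/-- the branch of digit `d` -/
noncomputable def D (b d : ℕ) (f : ℝ → ℝ) : ℝ → ℝ := fun x => f (((d : ℝ) + x) / b)

noncomputable def T0 (b d : ℕ) : ℕ → (ℝ → ℝ) → ℝ
  | 0, f => f 0
  | l + 1, f => T0 b d l (P b d f)

noncomputable def T1 (b d : ℕ) : ℕ → (ℝ → ℝ) → ℝ
  | 0, _ => 0
  | l + 1, f => T1 b d l (P b d f) + (1 / (b : ℝ)) * T0 b d l (D b d f)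

def Bd (M : ℝ) (f : ℝ → ℝ) : Prop := ∀ x, 0 ≤ x → x ≤ 1 → |f x| ≤ M

lemma P_lin (b d : ℕ) (f g : ℝ → ℝ) (c e : ℝ) :
    P b d (fun x => c * f x + e * g x) = fun x => c * P b d f x + e * P b d g x := by
  funext x
  simp only [P, Finset.sum_add_distrib, ← Finset.mul_sum]
  ring

lemma T0_lin (b d l : ℕ) (f g : ℝ → ℝ) (c e : ℝ) :
    T0 b d l (fun x => c * f x + e * g x) = c * T0 b d l f + e * T0 b d l g := by
  induction l generalizing f g with
  | zero => rfl
  | succ l ih => simp only [T0, P_lin, ih]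

lemma T1_lin (b d l : ℕ) (f g : ℝ → ℝ) (c e : ℝ) :
    T1 b d l (fun x => c * f x + e * g x) = c * T1 b d l f + e * T1 b d l g := by
  induction l generalizing f g with
  | zero => simp [T1]
  | succ l ih =>
    have : D b d (fun x => c * f x + e * g x) = fun x => c * D b d f x + e * D b d g x := rfl
    simp only [T1, P_lin, ih, this, T0_lin]
    ring

lemma mem01 {b a : ℕ} (hab : a < b) {x : ℝ} (h0 : 0 ≤ x) (h1 : x ≤ 1) :
    0 ≤ ((a : ℝ) + x) / b ∧ ((a : ℝ) + x) / b ≤ 1 := by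
  have hb : (0 : ℝ) < b := by exact_mod_cast (by omega : 0 < b)
  have : (a : ℝ) + 1 ≤ b := by exact_mod_cast hab
  refine ⟨by positivity, ?_⟩
  rw [div_le_one hb]; linarith

lemma card_erase {b d : ℕ} (hd : d < b) : (((Finset.range b).erase d).card : ℝ) = b - 1 := by
  rw [Finset.card_erase_of_mem (Finset.mem_range.2 hd), Finset.card_range,
    Nat.cast_sub (by omega)]
  simp

lemma Bd.P {b d : ℕ} (hd : d < b) {M : ℝ} {f : ℝ → ℝ} (h : Bd M f) :
    Bd (((b : ℝ) - 1) / b * M) (P b d f) := by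
  intro x h0 h1
  have hb : (0 : ℝ) < b := by exact_mod_cast (by omega : 0 < b)
  unfold Irw.P
  rw [abs_mul, abs_of_pos (by positivity)]
  have : |∑ a ∈ (Finset.range b).erase d, f (((a : ℝ) + x) / b)| ≤ ((b : ℝ) - 1) * M := by
    refine (Finset.abs_sum_le_sum_abs _ _).trans ?_
    rw [← card_erase hd, ← nsmul_eq_mul]
    refine Finset.sum_le_card_nsmul _ _ _ ?_
    intro a ha
    have := mem01 (Finset.mem_range.1 (Finset.mem_of_mem_erase ha)) h0 h1
    exact h _ this.1 this.2
  calc _ ≤ 1 / (b : ℝ) * (((b : ℝ) - 1) * M) := by gcongr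
    _ = _ := by ring

lemma Bd.D {b d : ℕ} (hd : d < b) {M : ℝ} {f : ℝ → ℝ} (h : Bd M f) : Bd M (D b d f) := by
  intro x h0 h1
  have := mem01 hd h0 h1
  exact h _ this.1 this.2

lemma T0_bd {b d : ℕ} (hd : d < b) (l : ℕ) {M : ℝ} {f : ℝ → ℝ} (h : Bd M f) :
    |T0 b d l f| ≤ (((b : ℝ) - 1) / b) ^ l * M := by
  induction l generalizing f M with
  | zero => simpa [T0] using h 0 le_rfl zero_le_one
  | succ l ih =>
    refine (ih (h.P hd)).trans (le_of_eq ?_)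
    ring

lemma T1_bd {b d : ℕ} (hb2 : 2 ≤ b) (hd : d < b) (l : ℕ) {M : ℝ} {f : ℝ → ℝ} (h : Bd M f) :
    |T1 b d l f| ≤ l * (((b : ℝ) - 1) / b) ^ l * M / (b - 1) := by
  have hb : (2 : ℝ) ≤ b := by exact_mod_cast hb2
  induction l generalizing f M with
  | zero => simp [T1]
  | succ l ih =>
    refine (abs_add_le _ _).trans ?_
    have h1 := ih (h.P hd)
    have h2 := T0_bd hd l (h.D hd)
    rw [abs_mul, abs_of_pos (by positivity : (0 : ℝ) < 1 / b)]
    have h3 : 1 / (b : ℝ) * |T0 b d l (Irw.D b d f)| ≤ 1 / (b : ℝ) * ((((b : ℝ) - 1) / b) ^ l * M) := by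
      gcongr
    refine (add_le_add h1 h3).trans (le_of_eq ?_)
    have : (b : ℝ) - 1 ≠ 0 := by linarith
    have : (b : ℝ) ≠ 0 := by linarith
    push_cast
    rw [pow_succ]
    field_simp

lemma q_lt {b : ℕ} (hb2 : 2 ≤ b) : ‖((b : ℝ) - 1) / b‖ < 1 := by
  have hb : (2 : ℝ) ≤ b := by exact_mod_cast hb2
  rw [Real.norm_eq_abs, abs_of_nonneg (div_nonneg (by linarith) (by linarith)),
    div_lt_one (by linarith)]
  linarith

lemma hs0 {b : ℕ} (hb2 : 2 ≤ b) (M : ℝ) :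
    HasSum (fun l : ℕ => (((b : ℝ) - 1) / b) ^ l * M) (b * M) := by
  have hb : (2 : ℝ) ≤ b := by exact_mod_cast hb2
  have := (hasSum_geometric_of_norm_lt_one (q_lt hb2)).mul_right M
  have h3 : (1 : ℝ) - ((b : ℝ) - 1) / b = (b : ℝ)⁻¹ := by field_simp; ring
  rw [h3, inv_inv] at this
  exact this

lemma hs1 {b : ℕ} (hb2 : 2 ≤ b) (M : ℝ) :
    HasSum (fun l : ℕ => l * (((b : ℝ) - 1) / b) ^ l * M / (b - 1)) (b * M) := by
  have hb : (2 : ℝ) ≤ b := by exact_mod_cast hb2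
  have := ((hasSum_coe_mul_geometric_of_norm_lt_one (q_lt hb2)).mul_right M).div_const ((b : ℝ) - 1)
  have h1 : (b : ℝ) - 1 ≠ 0 := by linarith
  have h2 : (b : ℝ) ≠ 0 := by linarith
  have h3 : (1 : ℝ) - ((b : ℝ) - 1) / b = 1 / b := by field_simp; ring
  have h4 : ((b : ℝ) - 1) / b / (1 / (b : ℝ)) ^ 2 * M / (b - 1) = b * M := by field_simp
  rw [h3, h4] at this
  exact this

lemma T0_summable {b d : ℕ} (hb2 : 2 ≤ b) (hd : d < b) {M : ℝ} {f : ℝ → ℝ} (h : Bd M f) :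
    Summable fun l => T0 b d l f :=
  Summable.of_norm_bounded (hs0 hb2 M).summable (fun l => T0_bd hd l h)

lemma T1_summable {b d : ℕ} (hb2 : 2 ≤ b) (hd : d < b) {M : ℝ} {f : ℝ → ℝ} (h : Bd M f) :
    Summable fun l => T1 b d l f :=
  Summable.of_norm_bounded (hs1 hb2 M).summable (fun l => T1_bd hb2 hd l h)

noncomputable def A0 (b d : ℕ) (f : ℝ → ℝ) : ℝ := ∑' l, T0 b d l f
noncomputable def A1 (b d : ℕ) (f : ℝ → ℝ) : ℝ := ∑' l, T1 b d l f

lemma A0_bd {b d : ℕ} (hb2 : 2 ≤ b) (hd : d < b) {M : ℝ} {f : ℝ → ℝ} (h : Bd M f) :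
    |A0 b d f| ≤ b * M := by
  rw [← Real.norm_eq_abs]
  exact tsum_of_norm_bounded (hs0 hb2 M) (fun l => T0_bd hd l h)

lemma A1_bd {b d : ℕ} (hb2 : 2 ≤ b) (hd : d < b) {M : ℝ} {f : ℝ → ℝ} (h : Bd M f) :
    |A1 b d f| ≤ b * M := by
  rw [← Real.norm_eq_abs]
  exact tsum_of_norm_bounded (hs1 hb2 M) (fun l => T1_bd hb2 hd l h)

lemma A0_lin {b d : ℕ} (hb2 : 2 ≤ b) (hd : d < b) {M N : ℝ} {f g : ℝ → ℝ} (hf : Bd M f)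
    (hg : Bd N g) (c e : ℝ) :
    A0 b d (fun x => c * f x + e * g x) = c * A0 b d f + e * A0 b d g := by
  unfold A0
  simp only [T0_lin]
  rw [Summable.tsum_add ((T0_summable hb2 hd hf).mul_left c) ((T0_summable hb2 hd hg).mul_left e),
    tsum_mul_left, tsum_mul_left]

lemma A1_lin {b d : ℕ} (hb2 : 2 ≤ b) (hd : d < b) {M N : ℝ} {f g : ℝ → ℝ} (hf : Bd M f)
    (hg : Bd N g) (c e : ℝ) :
    A1 b d (fun x => c * f x + e * g x) = c * A1 b d f + e * A1 b d g := by
  unfold A1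
  simp only [T1_lin]
  rw [Summable.tsum_add ((T1_summable hb2 hd hf).mul_left c) ((T1_summable hb2 hd hg).mul_left e),
    tsum_mul_left, tsum_mul_left]

lemma A0_rec {b d : ℕ} (hb2 : 2 ≤ b) (hd : d < b) {M : ℝ} {f : ℝ → ℝ} (h : Bd M f) :
    A0 b d f = f 0 + A0 b d (P b d f) := by
  unfold A0
  rw [(T0_summable hb2 hd h).tsum_eq_zero_add]
  rfl

lemma A1_rec {b d : ℕ} (hb2 : 2 ≤ b) (hd : d < b) {M : ℝ} {f : ℝ → ℝ} (h : Bd M f) :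
    A1 b d f = A1 b d (P b d f) + (1 / (b : ℝ)) * A0 b d (D b d f) := by
  unfold A1 A0
  rw [(T1_summable hb2 hd h).tsum_eq_zero_add]
  simp only [T1, zero_add]
  rw [Summable.tsum_add (T1_summable hb2 hd (h.P hd))
    ((T0_summable hb2 hd (h.D hd)).mul_left _), tsum_mul_left]

lemma P_one {b d : ℕ} (hd : d < b) (c : ℝ) :
    P b d (fun _ => c) = fun _ => ((b : ℝ) - 1) / b * c := by
  funext x
  simp only [P, Finset.sum_const, nsmul_eq_mul, card_erase hd]
  ring

lemma A0_one {b d : ℕ} (hb2 : 2 ≤ b) (hd : d < b) : A0 b d (fun _ => 1) = b := by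
  have hb : (2 : ℝ) ≤ b := by exact_mod_cast hb2
  have h1 : Bd 1 (fun _ => (1 : ℝ)) := fun x _ _ => by simp
  have h := A0_rec hb2 hd h1
  rw [P_one hd] at h
  have h2 := A0_lin hb2 hd h1 h1 (((b : ℝ) - 1) / b) 0
  simp only [zero_mul, add_zero] at h2
  rw [h2] at h
  field_simp at h
  linarith

lemma A1_one {b d : ℕ} (hb2 : 2 ≤ b) (hd : d < b) : A1 b d (fun _ => 1) = b := by
  have hb : (2 : ℝ) ≤ b := by exact_mod_cast hb2
  have h1 : Bd 1 (fun _ => (1 : ℝ)) := fun x _ _ => by simp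
  have h := A1_rec hb2 hd h1
  have h3 : D b d (fun _ => (1 : ℝ)) = fun _ => 1 := rfl
  rw [P_one hd, h3, A0_one hb2 hd] at h
  have h2 := A1_lin hb2 hd h1 h1 (((b : ℝ) - 1) / b) 0
  simp only [zero_mul, add_zero] at h2
  rw [h2] at h
  field_simp at h
  linarith

end Irw

namespace Irw

/-- number of digits `d` among the `l` lowest digits -/
def cnt (b d : ℕ) : ℕ → ℕ → ℕ
  | 0, _ => 0
  | l + 1, r => (if r % b = d then 1 else 0) + cnt b d l (r / b)

lemma cnt_top {b d : ℕ} (hb : 2 ≤ b) (l : ℕ) {a r : ℕ} (ha : a < b) (hr : r < b ^ l) :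
    cnt b d (l + 1) (a * b ^ l + r) = (if a = d then 1 else 0) + cnt b d l r := by
  induction l generalizing r with
  | zero =>
    have : r = 0 := by simpa using hr
    subst this
    simp [cnt, Nat.mod_eq_of_lt ha]
  | succ l ih =>
    have e1 : (a * b ^ (l + 1) + r) % b = r % b := by
      rw [pow_succ, ← mul_assoc, Nat.add_mod]
      simp
    have e2 : (a * b ^ (l + 1) + r) / b = a * b ^ l + r / b := by
      rw [pow_succ, ← mul_assoc, add_comm, Nat.add_mul_div_right _ _ (by omega), add_comm]
    have e3 : r / b < b ^ l := Nat.div_lt_of_lt_mul (by rwa [pow_succ, mul_comm] at hr)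
    rw [cnt, e1, e2, ih e3, cnt]
    ring

lemma digits_cnt {b d : ℕ} (hb : 2 ≤ b) (l : ℕ) {m : ℕ} (h1 : b ^ l ≤ m) (h2 : m < b ^ (l + 1)) :
    (Nat.digits b m).count d = cnt b d (l + 1) m := by
  induction l generalizing m with
  | zero =>
    simp at h1 h2
    rw [Nat.digits_of_lt b m (by omega) h2]
    simp [cnt, Nat.mod_eq_of_lt h2, List.count_singleton]
  | succ l ih =>
    have hm : 0 < m := lt_of_lt_of_le (by positivity) h1
    rw [Nat.digits_def' (by omega) hm, List.count_cons, cnt, ih, add_comm]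
    · simp
    · rw [Nat.le_div_iff_mul_le (by omega)]; rwa [← pow_succ]
    · exact Nat.div_lt_of_lt_mul (by rwa [pow_succ, mul_comm] at h2)

lemma sum_range_mul' (g : ℕ → ℝ) (n B : ℕ) :
    ∑ m ∈ Finset.range (n * B), g m = ∑ a ∈ Finset.range n, ∑ r ∈ Finset.range B, g (a * B + r) := by
  induction n with
  | zero => simp
  | succ n ih => rw [Nat.succ_mul, Finset.sum_range_add, ih, Finset.sum_range_succ]

lemma T0_eq {b d : ℕ} (hb : 2 ≤ b) (hd : d < b) (l : ℕ) (f : ℝ → ℝ) :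
    T0 b d l f = ∑ r ∈ Finset.range (b ^ l),
      if cnt b d l r = 0 then 1 / (b : ℝ) ^ l * f ((r : ℝ) / (b : ℝ) ^ l) else 0 := by
  have hb0 : (b : ℝ) ≠ 0 := by exact_mod_cast (by omega : b ≠ 0)
  induction l generalizing f with
  | zero => simp [T0, cnt]
  | succ l ih =>
    rw [T0, ih, pow_succ', sum_range_mul', ← Finset.add_sum_erase _ _ (Finset.mem_range.2 hd)]
    have hz : (∑ r ∈ Finset.range (b ^ l),
        if cnt b d (l + 1) (d * b ^ l + r) = 0 then
          1 / (b : ℝ) ^ (l + 1) * f (((d * b ^ l + r : ℕ) : ℝ) / (b : ℝ) ^ (l + 1)) else 0) = 0 := by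
      refine Finset.sum_eq_zero fun r hr => ?_
      rw [cnt_top hb l hd (Finset.mem_range.1 hr), if_pos rfl, if_neg (by omega)]
    rw [hz, zero_add, Finset.sum_comm]
    · refine Finset.sum_congr rfl fun r hr => ?_
      have e : ∀ a ∈ (Finset.range b).erase d,
          (if cnt b d (l + 1) (a * b ^ l + r) = 0 then
            1 / (b : ℝ) ^ (l + 1) * f (((a * b ^ l + r : ℕ) : ℝ) / (b : ℝ) ^ (l + 1)) else 0)
          = if cnt b d l r = 0 then 1 / (b : ℝ) ^ (l + 1) * f (((a : ℝ) + r / (b : ℝ) ^ l) / b) else 0 := by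
        intro a ha
        rw [Finset.mem_erase, Finset.mem_range] at ha
        rw [cnt_top hb l ha.2 (Finset.mem_range.1 hr), if_neg ha.1, zero_add]
        congr 3
        push_cast
        rw [pow_succ]
        field_simp
      rw [Finset.sum_congr rfl e]
      split_ifs
      · rw [P, Finset.mul_sum, Finset.mul_sum]
        refine Finset.sum_congr rfl fun a _ => ?_
        rw [pow_succ]
        field_simp
      · simp

lemma T1_eq {b d : ℕ} (hb : 2 ≤ b) (hd : d < b) (l : ℕ) (f : ℝ → ℝ) :
    T1 b d l f = ∑ r ∈ Finset.range (b ^ l),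
      if cnt b d l r = 1 then 1 / (b : ℝ) ^ l * f ((r : ℝ) / (b : ℝ) ^ l) else 0 := by
  have hb0 : (b : ℝ) ≠ 0 := by exact_mod_cast (by omega : b ≠ 0)
  induction l generalizing f with
  | zero => simp [T1, cnt]
  | succ l ih =>
    rw [T1, ih, pow_succ', sum_range_mul', ← Finset.add_sum_erase _ _ (Finset.mem_range.2 hd), add_comm]
    congr 1
    · rw [T0_eq hb hd, Finset.mul_sum]
      refine Finset.sum_congr rfl fun r hr => ?_
      rw [cnt_top hb l hd (Finset.mem_range.1 hr), if_pos rfl]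
      by_cases h : cnt b d l r = 0
      · rw [if_pos h, if_pos (by omega), D]
        push_cast
        have : ((d : ℝ) + r / (b : ℝ) ^ l) / b = (d * (b : ℝ) ^ l + r) / (b : ℝ) ^ (l + 1) := by
          rw [pow_succ]
          field_simp
        rw [this, pow_succ]
        field_simp
      · rw [if_neg h, if_neg (by omega), mul_zero]
    · rw [Finset.sum_comm]
      refine Finset.sum_congr rfl fun r hr => ?_
      have e : ∀ a ∈ (Finset.range b).erase d,
          (if cnt b d (l + 1) (a * b ^ l + r) = 1 then
            1 / (b : ℝ) ^ (l + 1) * f (((a * b ^ l + r : ℕ) : ℝ) / (b : ℝ) ^ (l + 1)) else 0)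
          = if cnt b d l r = 1 then 1 / (b : ℝ) ^ (l + 1) * f (((a : ℝ) + r / (b : ℝ) ^ l) / b) else 0 := by
        intro a ha
        rw [Finset.mem_erase, Finset.mem_range] at ha
        rw [cnt_top hb l ha.2 (Finset.mem_range.1 hr), if_neg ha.1, zero_add]
        congr 3
        push_cast
        rw [pow_succ]
        field_simp
      rw [Finset.sum_congr rfl e]
      split_ifs
      · rw [P, Finset.mul_sum, Finset.mul_sum]
        refine Finset.sum_congr rfl fun a _ => ?_
        rw [pow_succ]
        field_simp
      · simp

/-- nonzero digits other than `d` -/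
def NZ (b d : ℕ) : Finset ℕ := ((Finset.range b).erase 0).erase d

noncomputable def FF (b d : ℕ) : ℝ → ℝ := fun x => ∑ n ∈ NZ b d, 1 / ((n : ℝ) + x)
noncomputable def ff (d : ℕ) : ℝ → ℝ := fun x => 1 / ((d : ℝ) + x)

noncomputable def gt (b d : ℕ) (m : ℕ) : ℝ :=
  if 0 < m ∧ (Nat.digits b m).count d = 1 then (1 : ℝ) / m else 0

lemma gt_block {b d : ℕ} (hb : 2 ≤ b) (l : ℕ) {a r : ℕ} (ha0 : a ≠ 0) (ha : a < b)
    (hr : r < b ^ l) :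
    gt b d (a * b ^ l + r) = if (if a = d then 1 else 0) + cnt b d l r = 1 then
      1 / (b : ℝ) ^ l * (1 / ((a : ℝ) + r / (b : ℝ) ^ l)) else 0 := by
  have hb0 : (b : ℝ) ≠ 0 := by exact_mod_cast (by omega : b ≠ 0)
  have h1 : b ^ l ≤ a * b ^ l + r := by nlinarith [Nat.pos_of_ne_zero ha0, Nat.zero_le (b ^ l)]
  have h2 : a * b ^ l + r < b ^ (l + 1) := by
    rw [pow_succ']; nlinarith
  have h3 : 0 < b ^ l := by positivity
  have h4 : 0 < a * b ^ l + r := by omega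
  unfold gt
  rw [digits_cnt hb l h1 h2, cnt_top hb l ha hr]
  simp only [h4, true_and]
  congr 1
  push_cast
  rw [one_div_mul_one_div, mul_add, mul_comm (a : ℝ), mul_div_cancel₀]
  positivity

lemma gt_sum {b d : ℕ} (hb : 2 ≤ b) (hd0 : 1 ≤ d) (hd : d < b) (L : ℕ) :
    ∑ m ∈ Finset.range (b ^ L), gt b d m
      = ∑ l ∈ Finset.range L, (T1 b d l (FF b d) + T0 b d l (ff d)) := by
  induction L with
  | zero => simp [gt]
  | succ L ih =>
    rw [Finset.sum_range_succ, ← ih, pow_succ', sum_range_mul',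
      ← Finset.add_sum_erase _ _ (Finset.mem_range.2 (by omega : 0 < b))]
    simp only [zero_mul, zero_add]
    congr 1
    have hdm : d ∈ (Finset.range b).erase 0 := by simp; omega
    rw [← Finset.add_sum_erase _ _ hdm, add_comm]
    congr 1
    · rw [T1_eq hb hd, Finset.sum_comm]
      refine Finset.sum_congr rfl fun r hr => ?_
      have e : ∀ a ∈ ((Finset.range b).erase 0).erase d, gt b d (a * b ^ L + r)
          = if cnt b d L r = 1 then 1 / (b : ℝ) ^ L * (1 / ((a : ℝ) + r / (b : ℝ) ^ L)) else 0 := by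
        intro a ha
        rw [Finset.mem_erase, Finset.mem_erase, Finset.mem_range] at ha
        rw [gt_block hb L ha.2.1 ha.2.2 (Finset.mem_range.1 hr), if_neg ha.1, zero_add]
      rw [Finset.sum_congr rfl e]
      split_ifs
      · rw [FF, Finset.mul_sum]; rfl
      · simp
    · rw [T0_eq hb hd]
      refine Finset.sum_congr rfl fun r hr => ?_
      rw [gt_block hb L (by omega) hd (Finset.mem_range.1 hr), if_pos rfl]
      simp only [ff, add_eq_left]

lemma ff_bd {d : ℕ} (hd0 : 1 ≤ d) : Bd 1 (ff d) := by
  intro x h0 h1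
  have : (1 : ℝ) ≤ d := by exact_mod_cast hd0
  unfold ff
  rw [abs_of_nonneg (by positivity), div_le_one (by positivity)]
  linarith

lemma NZ_mem {b d n : ℕ} (h : n ∈ NZ b d) : n ≠ d ∧ 1 ≤ n ∧ n < b := by
  rw [NZ, Finset.mem_erase, Finset.mem_erase, Finset.mem_range] at h
  omega

lemma FF_bd (b d : ℕ) : Bd b (FF b d) := by
  intro x h0 h1
  unfold FF
  refine (Finset.abs_sum_le_sum_abs _ _).trans ?_
  have : ∑ n ∈ NZ b d, |1 / ((n : ℝ) + x)| ≤ (NZ b d).card • (1 : ℝ) := by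
    refine Finset.sum_le_card_nsmul _ _ _ fun n hn => ?_
    exact ff_bd (NZ_mem hn).2.1 x h0 h1
  refine this.trans ?_
  rw [nsmul_eq_mul, mul_one]
  have h2 : (NZ b d).card ≤ b := by
    calc _ ≤ (Finset.range b).card :=
          Finset.card_le_card ((Finset.erase_subset _ _).trans (Finset.erase_subset _ _))
      _ = b := Finset.card_range b
  exact_mod_cast h2

lemma irwin_eq {b d : ℕ} (hb : 2 ≤ b) (hd0 : 1 ≤ d) (hd : d < b) :
    irwinSum b d 1 = A1 b d (FF b d) + A0 b d (ff d) := by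
  have s1 := T1_summable hb hd (FF_bd b d)
  have s0 := T0_summable hb hd (ff_bd hd0)
  have hs := s1.hasSum.add s0.hasSum
  have ht := hs.tendsto_sum_nat
  have hnn : ∀ m, 0 ≤ gt b d m := fun m => by unfold gt; split_ifs <;> positivity
  have hmono : Monotone fun n => ∑ m ∈ Finset.range n, gt b d m := by
    refine monotone_nat_of_le_succ fun n => ?_
    rw [Finset.sum_range_succ]; linarith [hnn n]
  have hpow : Tendsto (fun L : ℕ => b ^ L) atTop atTop :=
    tendsto_pow_atTop_atTop_of_one_lt (by omega)
  have ht2 : Tendsto (fun L : ℕ => ∑ m ∈ Finset.range (b ^ L), gt b d m) atTop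
      (nhds (A1 b d (FF b d) + A0 b d (ff d))) := by
    simp only [gt_sum hb hd0 hd]
    exact ht
  have ht3 := (tendsto_iff_tendsto_subseq_of_monotone hmono hpow).2 ht2
  exact ((hasSum_iff_tendsto_nat_of_nonneg hnn _).2 ht3).tsum_eq
end Irw

namespace Irw

def Lp (L : ℝ) (f : ℝ → ℝ) : Prop :=
  ∀ x y, 0 ≤ x → x ≤ 1 → 0 ≤ y → y ≤ 1 → |f x - f y| ≤ L * |x - y|

lemma Lp.nonneg {L : ℝ} {f : ℝ → ℝ} (h : Lp L f) : 0 ≤ L := by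
  have := h 1 0 zero_le_one le_rfl le_rfl zero_le_one
  simp at this
  exact (abs_nonneg _).trans this

lemma Lp.mono {L L' : ℝ} {f : ℝ → ℝ} (h : Lp L f) (hl : L ≤ L') : Lp L' f := fun x y a b c d =>
  (h x y a b c d).trans (by gcongr)

lemma Lp.bd {L : ℝ} {f : ℝ → ℝ} (h : Lp L f) : Bd (|f 0| + L) f := by
  intro x h0 h1
  have h2 := h x 0 h0 h1 le_rfl zero_le_one
  have h3 : L * |x - 0| ≤ L * 1 := by
    have := h.nonneg
    rw [sub_zero, abs_of_nonneg h0]; gcongr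
  have h4 : |f x| ≤ |f x - f 0| + |f 0| := by
    have := abs_add_le (f x - f 0) (f 0); simpa using this
  linarith

lemma Lp.lin {L L' : ℝ} {f g : ℝ → ℝ} (hf : Lp L f) (hg : Lp L' g) (c e : ℝ) :
    Lp (|c| * L + |e| * L') (fun x => c * f x + e * g x) := by
  intro x y a1 a2 a3 a4
  have h1 := hf x y a1 a2 a3 a4
  have h2 := hg x y a1 a2 a3 a4
  calc |c * f x + e * g x - (c * f y + e * g y)|
      = |c * (f x - f y) + e * (g x - g y)| := by ring_nf
    _ ≤ |c * (f x - f y)| + |e * (g x - g y)| := abs_add_le _ _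
    _ = |c| * |f x - f y| + |e| * |g x - g y| := by rw [abs_mul, abs_mul]
    _ ≤ |c| * (L * |x - y|) + |e| * (L' * |x - y|) := by gcongr
    _ = _ := by ring

lemma Lp.sum {ι : Type*} (s : Finset ι) {L : ι → ℝ} {f : ι → ℝ → ℝ}
    (h : ∀ i ∈ s, Lp (L i) (f i)) : Lp (∑ i ∈ s, L i) (fun x => ∑ i ∈ s, f i x) := by
  intro x y a1 a2 a3 a4
  rw [← Finset.sum_sub_distrib, Finset.sum_mul]
  exact (Finset.abs_sum_le_sum_abs _ _).trans
    (Finset.sum_le_sum fun i hi => h i hi x y a1 a2 a3 a4)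

lemma Lp.mul_left {L : ℝ} {f : ℝ → ℝ} (h : Lp L f) (c : ℝ) : Lp (|c| * L) (fun x => c * f x) := by
  intro x y a1 a2 a3 a4
  rw [← mul_sub, abs_mul, mul_assoc]
  have := h x y a1 a2 a3 a4
  gcongr

lemma Lp_const (c : ℝ) : Lp 0 (fun _ => c) := by
  intro x y _ _ _ _
  simp

lemma Lp.cont {L : ℝ} {f : ℝ → ℝ} (h : Lp L f) : ContinuousOn f (Set.Icc 0 1) := by
  have : LipschitzOnWith (Real.toNNReal L) f (Set.Icc 0 1) := by
    refine LipschitzOnWith.of_dist_le_mul fun x hx y hy => ?_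
    rw [Real.dist_eq, Real.dist_eq, Real.coe_toNNReal _ h.nonneg]
    exact h x y hx.1 hx.2 hy.1 hy.2
  exact this.continuousOn

lemma Lp.ii {L : ℝ} {f : ℝ → ℝ} (h : Lp L f) : IntervalIntegrable f MeasureTheory.volume 0 1 := by
  apply ContinuousOn.intervalIntegrable
  rw [Set.uIcc_of_le zero_le_one]
  exact h.cont

lemma Lp.comp {b a : ℕ} (ha : a < b) {L : ℝ} {f : ℝ → ℝ} (h : Lp L f) :
    Lp (L / b) (fun x => f (((a : ℝ) + x) / b)) := by
  intro x y a1 a2 a3 a4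
  have hb : (0 : ℝ) < b := by exact_mod_cast (by omega : 0 < b)
  have e1 := mem01 ha a1 a2
  have e2 := mem01 ha a3 a4
  refine (h _ _ e1.1 e1.2 e2.1 e2.2).trans (le_of_eq ?_)
  rw [← sub_div, add_sub_add_left_eq_sub, abs_div, abs_of_pos hb]
  ring

lemma Lp.P {b d : ℕ} (hd : d < b) {L : ℝ} {f : ℝ → ℝ} (h : Lp L f) : Lp (L / b) (P b d f) := by
  have hb : (0 : ℝ) < b := by exact_mod_cast (by omega : 0 < b)
  have hL := h.nonneg
  have h1 := (Lp.sum ((Finset.range b).erase d) (L := fun _ => L / b)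
    (f := fun a x => f (((a : ℝ) + x) / b))
    (fun a ha => h.comp (Finset.mem_range.1 (Finset.mem_of_mem_erase ha)))).mul_left (1 / (b : ℝ))
  refine h1.mono ?_
  rw [Finset.sum_const, nsmul_eq_mul, card_erase hd, abs_of_pos (by positivity)]
  have : 1 / (b : ℝ) * ((b - 1) * (L / b)) = (1 - 1 / b) * (L / b) := by field_simp
  rw [this]
  have h3 : (1 - 1 / (b : ℝ)) ≤ 1 := by
    have : 0 < 1 / (b : ℝ) := by positivity
    linarith
  calc _ ≤ 1 * (L / b) := by gcongr
    _ = _ := one_mul _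

noncomputable def N0 (b d : ℕ) (f : ℝ → ℝ) : ℝ := A0 b d f - b * ∫ x in (0 : ℝ)..1, f x
noncomputable def N1 (b d : ℕ) (f : ℝ → ℝ) : ℝ := A1 b d f - b * ∫ x in (0 : ℝ)..1, f x

structure Fn (N : (ℝ → ℝ) → ℝ) : Prop where
  lin : ∀ (L L' : ℝ) (f g : ℝ → ℝ) (c e : ℝ), Lp L f → Lp L' g →
    N (fun x => c * f x + e * g x) = c * N f + e * N g
  one : N (fun _ => 1) = 0

lemma int_lin {L L' : ℝ} {f g : ℝ → ℝ} (hf : Lp L f) (hg : Lp L' g) (c e : ℝ) :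
    ∫ x in (0 : ℝ)..1, (c * f x + e * g x)
      = c * (∫ x in (0 : ℝ)..1, f x) + e * ∫ x in (0 : ℝ)..1, g x := by
  rw [intervalIntegral.integral_add (hf.ii.const_mul c) (hg.ii.const_mul e),
    intervalIntegral.integral_const_mul, intervalIntegral.integral_const_mul]

lemma Fn0 {b d : ℕ} (hb2 : 2 ≤ b) (hd : d < b) : Fn (N0 b d) where
  lin L L' f g c e hf hg := by
    unfold N0
    rw [A0_lin hb2 hd hf.bd hg.bd, int_lin hf hg]; ring
  one := by
    unfold N0
    rw [A0_one hb2 hd]; simp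

lemma Fn1 {b d : ℕ} (hb2 : 2 ≤ b) (hd : d < b) : Fn (N1 b d) where
  lin L L' f g c e hf hg := by
    unfold N1
    rw [A1_lin hb2 hd hf.bd hg.bd, int_lin hf hg]; ring
  one := by
    unfold N1
    rw [A1_one hb2 hd]; simp

lemma int_split {b d : ℕ} (hd : d < b) {L : ℝ} {f : ℝ → ℝ} (h : Lp L f) :
    (b : ℝ) * ∫ x in (0 : ℝ)..1, f x
      = b * (∫ x in (0 : ℝ)..1, P b d f x) + ∫ x in (0 : ℝ)..1, D b d f x := by
  have hb : (0 : ℝ) < b := by exact_mod_cast (by omega : 0 < b)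
  have e1 : ∀ a ∈ Finset.range b, ∫ x in (0 : ℝ)..1, f (((a : ℝ) + x) / b)
      = b * ∫ x in ((a : ℝ) / b)..(((a + 1 : ℕ) : ℝ) / b), f x := by
    intro a _
    have := intervalIntegral.integral_comp_div_add (a := 0) (b := 1) f hb.ne' ((a : ℝ) / b)
    rw [smul_eq_mul] at this
    have e : ∀ x : ℝ, ((a : ℝ) + x) / b = x / b + a / b := fun x => by ring
    simp only [e]
    rw [this]
    congr 2 <;> · push_cast; ring
  have e2 : ∑ a ∈ Finset.range b, ∫ x in ((a : ℝ) / b)..(((a + 1 : ℕ) : ℝ) / b), f x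
      = ∫ x in (0 : ℝ)..1, f x := by
    have := intervalIntegral.sum_integral_adjacent_intervals (f := f)
      (μ := MeasureTheory.volume) (a := fun k : ℕ => (k : ℝ) / b) (n := b) (by
        intro k hk
        apply ContinuousOn.intervalIntegrable
        apply h.cont.mono
        have hk1 : (k : ℝ) + 1 ≤ b := by exact_mod_cast hk
        rw [Set.uIcc_of_le (by push_cast; gcongr; linarith)]
        apply Set.Icc_subset_Icc
        · positivity
        · push_cast; rw [div_le_one hb]; exact hk1)
    rw [this]
    simp [hb.ne']
  have e3 : ∫ x in (0 : ℝ)..1, P b d f x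
      = (1 / (b : ℝ)) * ∑ a ∈ (Finset.range b).erase d, ∫ x in (0 : ℝ)..1, f (((a : ℝ) + x) / b) := by
    unfold P
    rw [intervalIntegral.integral_const_mul, intervalIntegral.integral_finsetSum]
    intro a ha
    exact (h.comp (Finset.mem_range.1 (Finset.mem_of_mem_erase ha))).ii
  rw [← e2, Finset.mul_sum, ← Finset.sum_congr rfl e1,
    ← Finset.add_sum_erase _ _ (Finset.mem_range.2 hd), e3, ← mul_assoc,
    mul_one_div_cancel hb.ne', one_mul, add_comm]
  rfl

lemma N0_rec {b d : ℕ} (hb2 : 2 ≤ b) (hd : d < b) {L : ℝ} {f : ℝ → ℝ} (h : Lp L f) :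
    N0 b d f = f 0 - (∫ x in (0 : ℝ)..1, D b d f x) + N0 b d (P b d f) := by
  unfold N0
  rw [A0_rec hb2 hd h.bd, int_split hd h]; ring

lemma N1_rec {b d : ℕ} (hb2 : 2 ≤ b) (hd : d < b) {L : ℝ} {f : ℝ → ℝ} (h : Lp L f) :
    N1 b d f = N1 b d (P b d f) + (1 / (b : ℝ)) * N0 b d (D b d f) := by
  have hb : (b : ℝ) ≠ 0 := by exact_mod_cast (by omega : b ≠ 0)
  unfold N0 N1
  rw [A1_rec hb2 hd h.bd, int_split hd h]; field_simp; ring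

/-- first crude Lipschitz bound for a functional of mass `b` -/
lemma crude {b : ℕ} {N A : (ℝ → ℝ) → ℝ} (hN : Fn N)
    (hdef : ∀ f, N f = A f - b * ∫ x in (0 : ℝ)..1, f x)
    (hA : ∀ M f, Bd M f → |A f| ≤ b * M) {L : ℝ} {f : ℝ → ℝ} (h : Lp L f) :
    |N f| ≤ 2 * b * L := by
  have h1 : N (fun x => 1 * f x + (- f 0) * (1 : ℝ)) = N f := by
    rw [hN.lin L 0 f (fun _ => 1) 1 (- f 0) h (Lp_const 1), hN.one]; ring
  have hbd : Bd L (fun x => 1 * f x + (- f 0) * (1 : ℝ)) := by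
    intro x h0 h1
    have h2 := h x 0 h0 h1 le_rfl zero_le_one
    have h3 : L * |x - 0| ≤ L * 1 := by
      have := h.nonneg
      rw [sub_zero, abs_of_nonneg h0]; gcongr
    have e : 1 * f x + (- f 0) * (1 : ℝ) = f x - f 0 := by ring
    show |1 * f x + (- f 0) * (1 : ℝ)| ≤ L
    rw [e]; linarith
  rw [← h1, hdef]
  have h2 := hA L _ hbd
  have h3 : |∫ x in (0 : ℝ)..1, (1 * f x + (- f 0) * (1 : ℝ))| ≤ L := by
    have := intervalIntegral.norm_integral_le_of_norm_le_const (a := 0) (b := 1) (C := L)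
      (f := fun x => 1 * f x + (- f 0) * (1 : ℝ)) (by
        intro x hx
        rw [Set.uIoc_of_le zero_le_one] at hx
        exact hbd x hx.1.le hx.2)
    simpa using this
  refine (abs_sub _ _).trans ?_
  rw [abs_mul, Nat.abs_cast]
  have : (b : ℝ) * |∫ x in (0 : ℝ)..1, (1 * f x + (- f 0) * (1 : ℝ))| ≤ b * L := by gcongr
  linarith

lemma E_bd {b d : ℕ} (hd : d < b) {L : ℝ} {f : ℝ → ℝ} (h : Lp L f) :
    |f 0 - ∫ x in (0 : ℝ)..1, D b d f x| ≤ L * ((d + 1) / b) := by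
  have hb : (0 : ℝ) < b := by exact_mod_cast (by omega : 0 < b)
  have hi : IntervalIntegrable (D b d f) MeasureTheory.volume 0 1 := (h.comp hd).ii
  have e : f 0 - (∫ x in (0 : ℝ)..1, D b d f x) = ∫ x in (0 : ℝ)..1, (f 0 - D b d f x) := by
    rw [intervalIntegral.integral_sub (by simp) hi]; simp
  rw [e]
  have := intervalIntegral.norm_integral_le_of_norm_le_const (a := 0) (b := 1)
    (C := L * ((d + 1) / b)) (f := fun x => f 0 - D b d f x) (by
      intro x hx
      rw [Set.uIoc_of_le zero_le_one] at hx
      have hm := mem01 hd hx.1.le hx.2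
      have h1 := h 0 _ le_rfl zero_le_one hm.1 hm.2
      refine h1.trans ?_
      rw [zero_sub, abs_neg, abs_of_nonneg hm.1]
      have := h.nonneg
      gcongr
      exact hx.2)
  simpa using this

lemma N0_step {b d : ℕ} (hb2 : 2 ≤ b) (hd : d < b) {K : ℝ}
    (hK : ∀ (L : ℝ) (f : ℝ → ℝ), Lp L f → |N0 b d f| ≤ K * L) (L : ℝ) (f : ℝ → ℝ) (h : Lp L f) :
    |N0 b d f| ≤ ((d + 1) / b + K / b) * L := by
  rw [N0_rec hb2 hd h]
  have h1 := E_bd hd h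
  have h2 := hK _ _ (h.P hd)
  refine (abs_add_le _ _).trans ((add_le_add h1 h2).trans (le_of_eq ?_))
  ring

lemma N0_lip {b d : ℕ} (hb2 : 2 ≤ b) (hd : d < b) (L : ℝ) (f : ℝ → ℝ) (h : Lp L f) :
    |N0 b d f| ≤ (2 * d + 4) / b * L := by
  have hb : (2 : ℝ) ≤ b := by exact_mod_cast hb2
  have k0 : ∀ (L : ℝ) (f : ℝ → ℝ), Lp L f → |N0 b d f| ≤ 2 * b * L := fun L f h =>
    crude (Fn0 hb2 hd) (fun _ => rfl) (fun _ _ h => A0_bd hb2 hd h) h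
  have k2 := N0_step hb2 hd (N0_step hb2 hd k0) L f h
  refine k2.trans ?_
  have := h.nonneg
  gcongr
  have e : ((d : ℝ) + 1) / b + ((d + 1) / b + 2 * b / b) / b
      = ((d + 1) + (d + 1) / b + 2) / b := by field_simp; ring
  rw [e]
  refine div_le_div_of_nonneg_right ?_ (by positivity)
  have : ((d : ℝ) + 1) / b ≤ d + 1 := div_le_self (by positivity) (by linarith)
  linarith

lemma N1_step {b d : ℕ} (hb2 : 2 ≤ b) (hd : d < b) {K : ℝ}
    (hK : ∀ (L : ℝ) (f : ℝ → ℝ), Lp L f → |N1 b d f| ≤ K * L) (L : ℝ) (f : ℝ → ℝ) (h : Lp L f) :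
    |N1 b d f| ≤ (K / b + (2 * d + 4) / b ^ 3) * L := by
  have hb : (2 : ℝ) ≤ b := by exact_mod_cast hb2
  rw [N1_rec hb2 hd h]
  have h1 := N0_lip hb2 hd _ _ (h.comp hd)
  have h2 := hK _ _ (h.P hd)
  refine (abs_add_le _ _).trans ?_
  rw [abs_mul, abs_of_pos (by positivity : (0 : ℝ) < 1 / b)]
  calc _ ≤ K * (L / b) + 1 / b * ((2 * d + 4) / b * (L / b)) := by
        refine add_le_add h2 ?_
        exact mul_le_mul_of_nonneg_left h1 (by positivity)
    _ = _ := by field_simp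

lemma N1_lip {b d : ℕ} (hb2 : 2 ≤ b) (hd : d < b) (L : ℝ) (f : ℝ → ℝ) (h : Lp L f) :
    |N1 b d f| ≤ (8 * d + 18) / b ^ 3 * L := by
  have hb : (2 : ℝ) ≤ b := by exact_mod_cast hb2
  have k0 : ∀ (L : ℝ) (f : ℝ → ℝ), Lp L f → |N1 b d f| ≤ 2 * b * L := fun L f h =>
    crude (Fn1 hb2 hd) (fun _ => rfl) (fun _ _ h => A1_bd hb2 hd h) h
  have k2 := N1_step hb2 hd (N1_step hb2 hd (N1_step hb2 hd (N1_step hb2 hd k0))) L f h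
  refine k2.trans ?_
  have := h.nonneg
  gcongr
  set C : ℝ := 2 * d + 4 with hC
  have hC0 : 0 ≤ C := by positivity
  have e : ((((2 * b / b + C / b ^ 3) / b + C / b ^ 3) / b + C / b ^ 3) / b + C / (b : ℝ) ^ 3)
      = (2 + C / b / b / b + C / b / b + C / b + C) / b ^ 3 := by field_simp
  rw [e]
  refine div_le_div_of_nonneg_right ?_ (by positivity)
  have i1 : C / b ≤ C := div_le_self hC0 (by linarith)
  have i2 : C / b / b ≤ C / b := div_le_self (by positivity) (by linarith)
  have i3 : C / b / b / b ≤ C / b / b := div_le_self (by positivity) (by linarith)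
  linarith

lemma Lp_pow (k : ℕ) : Lp k (fun x => x ^ k) := by
  induction k with
  | zero => simpa using Lp_const 1
  | succ k ih =>
    intro x y a1 a2 a3 a4
    have := ih x y a1 a2 a3 a4
    have e : x ^ (k + 1) - y ^ (k + 1) = x * (x ^ k - y ^ k) + y ^ k * (x - y) := by ring
    rw [e]
    refine (abs_add_le _ _).trans ?_
    rw [abs_mul, abs_mul, abs_of_nonneg a1, abs_of_nonneg (pow_nonneg a3 k)]
    have h1 : x * |x ^ k - y ^ k| ≤ 1 * (k * |x - y|) := by gcongr
    have h2 : y ^ k * |x - y| ≤ 1 * |x - y| := by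
      gcongr
      exact pow_le_one₀ a3 a4
    push_cast
    linarith

lemma Fn.expand {N : (ℝ → ℝ) → ℝ} (hN : Fn N) {K : ℝ}
    (hK : ∀ (L : ℝ) (f : ℝ → ℝ), Lp L f → |N f| ≤ K * L) {L : ℝ} {f : ℝ → ℝ}
    (c0 c1 c2 c3 c4 : ℝ)
    (h : Lp L (fun x => f x - (c0 + c1 * x + c2 * x ^ 2 + c3 * x ^ 3 + c4 * x ^ 4))) :
    |N f - (c1 * N (fun x => x) + c2 * N (fun x => x ^ 2) + c3 * N (fun x => x ^ 3)
      + c4 * N (fun x => x ^ 4))| ≤ K * L := by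
  have l1 : Lp 1 (fun x : ℝ => x) := by simpa using Lp_pow 1
  have q4 := (Lp_pow 4).lin h c4 1
  have q3 := (Lp_pow 3).lin q4 c3 1
  have q2 := (Lp_pow 2).lin q3 c2 1
  have q1 := l1.lin q2 c1 1
  have e0 := hN.lin _ _ _ _ c0 1 (Lp_const 1) q1
  rw [hN.lin _ _ _ _ c1 1 l1 q2, hN.lin _ _ _ _ c2 1 (Lp_pow 2) q3,
    hN.lin _ _ _ _ c3 1 (Lp_pow 3) q4, hN.lin _ _ _ _ c4 1 (Lp_pow 4) h, hN.one] at e0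
  have e1 : (fun x => c0 * 1 + 1 * (c1 * x + 1 * (c2 * x ^ 2 + 1 * (c3 * x ^ 3 + 1 * (c4 * x ^ 4
      + 1 * (f x - (c0 + c1 * x + c2 * x ^ 2 + c3 * x ^ 3 + c4 * x ^ 4)))))))  = f := by
    funext x; ring
  rw [e1] at e0
  have := hK _ _ h
  rw [e0]
  convert this using 2
  ring

lemma Fn.expand_exact {N : (ℝ → ℝ) → ℝ} (hN : Fn N) {K : ℝ}
    (hK : ∀ (L : ℝ) (f : ℝ → ℝ), Lp L f → |N f| ≤ K * L) {f : ℝ → ℝ}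
    (c0 c1 c2 c3 c4 : ℝ)
    (h : ∀ x, f x = c0 + c1 * x + c2 * x ^ 2 + c3 * x ^ 3 + c4 * x ^ 4) :
    N f = (c1 * N (fun x => x) + c2 * N (fun x => x ^ 2) + c3 * N (fun x => x ^ 3)
      + c4 * N (fun x => x ^ 4)) := by
  have := hN.expand hK (f := f) (L := 0) c0 c1 c2 c3 c4 (by
    simpa [h] using Lp_const 0)
  rw [mul_zero] at this
  have := abs_eq_zero.1 (le_antisymm this (abs_nonneg _))
  linarith
end Irw

namespace Irw

noncomputable def H (b : ℕ) : ℝ := 1 / (b : ℝ)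

def BO (d k : ℕ) (X : ℕ → ℝ) : Prop := ∃ C, ∀ b, d < b → 2 ≤ b → |X b| ≤ C * H b ^ k

lemma H_pos {b : ℕ} (hb : 2 ≤ b) : 0 < H b := by
  have hb : (2 : ℝ) ≤ b := by exact_mod_cast hb
  unfold H; positivity

lemma H_le {b : ℕ} (hb : 2 ≤ b) : H b ≤ 1 := by
  have hb : (2 : ℝ) ≤ b := by exact_mod_cast hb
  unfold H; rw [div_le_one (by positivity)]; linarith

lemma bH {b : ℕ} (hb : 2 ≤ b) : (b : ℝ) * H b = 1 := by
  have hb : (2 : ℝ) ≤ b := by exact_mod_cast hb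
  unfold H; field_simp

lemma b_eq (b : ℕ) : (b : ℝ) = 1 / H b := by
  unfold H; simp

variable {d : ℕ}

lemma BO.congr {k : ℕ} {X Y : ℕ → ℝ} (h : BO d k X)
    (e : ∀ b, d < b → 2 ≤ b → Y b = X b) : BO d k Y := by
  obtain ⟨C, hC⟩ := h
  exact ⟨C, fun b h1 h2 => by rw [e b h1 h2]; exact hC b h1 h2⟩

lemma BO.mono {j k : ℕ} {X : ℕ → ℝ} (h : BO d j X) (hk : k ≤ j) : BO d k X := by
  obtain ⟨C, hC⟩ := h
  refine ⟨|C|, fun b h1 h2 => (hC b h1 h2).trans ?_⟩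
  have := (H_pos h2).le
  calc C * H b ^ j ≤ |C| * H b ^ j := by gcongr; exact le_abs_self C
    _ ≤ |C| * H b ^ k := by
      gcongr ?_ * ?_
      exact pow_le_pow_of_le_one this (H_le h2) hk

lemma BO.add {k : ℕ} {X Y : ℕ → ℝ} (hX : BO d k X) (hY : BO d k Y) :
    BO d k (fun b => X b + Y b) := by
  obtain ⟨C, hC⟩ := hX
  obtain ⟨C', hC'⟩ := hY
  refine ⟨C + C', fun b h1 h2 => (abs_add_le _ _).trans ?_⟩
  have := hC b h1 h2
  have := hC' b h1 h2
  linarith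

lemma BO.neg {k : ℕ} {X : ℕ → ℝ} (hX : BO d k X) : BO d k (fun b => - X b) := by
  obtain ⟨C, hC⟩ := hX
  exact ⟨C, fun b h1 h2 => by rw [abs_neg]; exact hC b h1 h2⟩

lemma BO.sub {k : ℕ} {X Y : ℕ → ℝ} (hX : BO d k X) (hY : BO d k Y) :
    BO d k (fun b => X b - Y b) := (hX.add hY.neg).congr fun _ _ _ => sub_eq_add_neg _ _

lemma BO.mul {i j k : ℕ} {X Y : ℕ → ℝ} (hX : BO d i X) (hY : BO d j Y) (hk : k ≤ i + j) :
    BO d k (fun b => X b * Y b) := by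
  obtain ⟨C, hC⟩ := hX
  obtain ⟨C', hC'⟩ := hY
  refine BO.mono (j := i + j) ⟨C * C', fun b h1 h2 => ?_⟩ hk
  have a1 := hC b h1 h2
  have a2 := hC' b h1 h2
  rw [abs_mul, pow_add]
  calc |X b| * |Y b| ≤ (C * H b ^ i) * (C' * H b ^ j) :=
        mul_le_mul a1 a2 (abs_nonneg _) ((abs_nonneg _).trans a1)
    _ = _ := by ring

lemma BO_H (d k : ℕ) : BO d k (fun b => H b ^ k) :=
  ⟨1, fun b _ h2 => by rw [abs_of_nonneg (pow_nonneg (H_pos h2).le k), one_mul]⟩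

lemma BO_g (d : ℕ) (g : ℝ → ℝ) (hg : ContinuousOn g (Set.Icc 0 1)) : BO d 0 (fun b => g (H b)) := by
  obtain ⟨C, hC⟩ := isCompact_Icc.exists_bound_of_continuousOn hg
  refine ⟨C, fun b _ h2 => ?_⟩
  rw [pow_zero, mul_one]
  exact hC _ ⟨(H_pos h2).le, H_le h2⟩

/-- a function of `H` times a power of `H` -/
lemma BO_p (d k : ℕ) (g : ℝ → ℝ) (hg : ContinuousOn g (Set.Icc 0 1)) :
    BO d k (fun b => H b ^ k * g (H b)) :=
  (BO_H d k).mul (BO_g d g hg) (by omega)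

lemma BO_c (d : ℕ) (c : ℝ) : BO d 0 (fun _ => c) := BO_g d (fun _ => c) continuousOn_const

/-! moments -/

noncomputable def v (d k b : ℕ) : ℝ := N0 b d (fun x => x ^ k)
noncomputable def w (d k b : ℕ) : ℝ := N1 b d (fun x => x ^ k)

lemma v_crude (d k : ℕ) : BO d 1 (v d k) := by
  refine ⟨(2 * d + 4) * k, fun b h1 h2 => (N0_lip h2 h1 k _ (Lp_pow k)).trans (le_of_eq ?_)⟩
  unfold H; ring

lemma w_crude (d k : ℕ) : BO d 3 (w d k) := by
  refine ⟨(8 * d + 18) * k, fun b h1 h2 => (N1_lip h2 h1 k _ (Lp_pow k)).trans (le_of_eq ?_)⟩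
  unfold H; ring

lemma int_pow (b d k : ℕ) : ∫ x in (0 : ℝ)..1, D b d (fun x => x ^ k) x
    = H b ^ k * (((d + 1 : ℝ) ^ (k + 1) - d ^ (k + 1)) / (k + 1)) := by
  unfold D
  simp only [div_pow]
  rw [intervalIntegral.integral_div,
    intervalIntegral.integral_comp_add_left (fun x : ℝ => x ^ k) (d : ℝ), integral_pow]
  unfold H
  rw [one_div, inv_pow]
  ring_nf

lemma sum_er {b : ℕ} (hd : d < b) (g : ℕ → ℝ) :
    ∑ a ∈ (Finset.range b).erase d, g a = ∑ a ∈ Finset.range b, g a - g d := by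
  rw [← Finset.add_sum_erase _ _ (Finset.mem_range.2 hd)]; ring

lemma sum1 (b : ℕ) : ∑ a ∈ Finset.range b, (a : ℝ) = b * (b - 1) / 2 := by
  induction b with
  | zero => simp
  | succ n ih => rw [Finset.sum_range_succ, ih]; push_cast; ring

lemma sum2 (b : ℕ) : ∑ a ∈ Finset.range b, (a : ℝ) ^ 2 = b * (b - 1) * (2 * b - 1) / 6 := by
  induction b with
  | zero => simp
  | succ n ih => rw [Finset.sum_range_succ, ih]; push_cast; ring

lemma v1_rec {b : ℕ} (h1 : d < b) (h2 : 2 ≤ b) :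
    v d 1 b = -(d + 1 / 2) * H b + (H b - H b ^ 2) * v d 1 b := by
  have hr := N0_rec h2 h1 (Lp_pow 1)
  have e := (Fn0 h2 h1).expand_exact (N0_lip h2 h1) (f := P b d (fun x => x ^ 1))
    (H b ^ 2 * ∑ a ∈ (Finset.range b).erase d, (a : ℝ)) (H b - H b ^ 2) 0 0 0 (by
      intro x
      simp only [P, pow_one, ← Finset.sum_div, Finset.sum_add_distrib, Finset.sum_const,
        nsmul_eq_mul, card_erase h1]
      have := bH h2
      unfold H at *
      field_simp
      ring)
  rw [int_pow, e] at hr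
  have q : v d 1 b = N0 b d (fun x => x) := by simp [v]
  rw [show N0 b d (fun x => x ^ 1) = v d 1 b from rfl, ← q] at hr
  push_cast at hr
  linear_combination hr

lemma v2_rec {b : ℕ} (h1 : d < b) (h2 : 2 ≤ b) :
    v d 2 b = -(d ^ 2 + d + 1 / 3) * H b ^ 2 + (H b - H b ^ 2 - 2 * d * H b ^ 3) * v d 1 b
      + (H b ^ 2 - H b ^ 3) * v d 2 b := by
  have hr := N0_rec h2 h1 (Lp_pow 2)
  have e := (Fn0 h2 h1).expand_exact (N0_lip h2 h1) (f := P b d (fun x => x ^ 2))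
    (H b ^ 3 * ∑ a ∈ (Finset.range b).erase d, (a : ℝ) ^ 2) (H b - H b ^ 2 - 2 * d * H b ^ 3)
    (H b ^ 2 - H b ^ 3) 0 0 (by
      intro x
      have e1 : ∀ a : ℕ, (((a : ℝ) + x) / b) ^ 2
          = H b ^ 2 * (a : ℝ) ^ 2 + 2 * H b ^ 2 * x * (a : ℝ) + H b ^ 2 * x ^ 2 := by
        intro a; unfold H; ring
      simp only [P, e1, Finset.sum_add_distrib, Finset.sum_const, ← Finset.mul_sum,
        nsmul_eq_mul, card_erase h1]
      rw [sum_er h1 (fun a => (a : ℝ)), sum1]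
      have := b_eq b
      rw [this]
      have := (H_pos h2).ne'
      field_simp
      ring)
  rw [int_pow, e] at hr
  have q : v d 1 b = N0 b d (fun x => x) := by simp [v]
  rw [show N0 b d (fun x => x ^ 2) = v d 2 b from rfl, ← q] at hr
  push_cast at hr
  linear_combination hr

lemma v3_rec {b : ℕ} (h1 : d < b) (h2 : 2 ≤ b) :
    v d 3 b = -(((d : ℝ) + 1) ^ 4 - d ^ 4) / 4 * H b ^ 3
      + (H b * (1 - H b) * (2 - H b) / 2 - 3 * d ^ 2 * H b ^ 4) * v d 1 b
      + (3 / 2 * H b ^ 2 * (1 - H b) - 3 * d * H b ^ 4) * v d 2 b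
      + (H b ^ 3 - H b ^ 4) * v d 3 b := by
  have hr := N0_rec h2 h1 (Lp_pow 3)
  have e := (Fn0 h2 h1).expand_exact (N0_lip h2 h1) (f := P b d (fun x => x ^ 3))
    (H b ^ 4 * ∑ a ∈ (Finset.range b).erase d, (a : ℝ) ^ 3)
    (H b * (1 - H b) * (2 - H b) / 2 - 3 * d ^ 2 * H b ^ 4)
    (3 / 2 * H b ^ 2 * (1 - H b) - 3 * d * H b ^ 4) (H b ^ 3 - H b ^ 4) 0 (by
      intro x
      have e1 : ∀ a : ℕ, (((a : ℝ) + x) / b) ^ 3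
          = H b ^ 3 * (a : ℝ) ^ 3 + 3 * H b ^ 3 * x * (a : ℝ) ^ 2 + 3 * H b ^ 3 * x ^ 2 * (a : ℝ)
            + H b ^ 3 * x ^ 3 := by
        intro a; unfold H; ring
      simp only [P, e1, Finset.sum_add_distrib, Finset.sum_const, ← Finset.mul_sum,
        nsmul_eq_mul, card_erase h1]
      rw [sum_er h1 (fun a => (a : ℝ)), sum1, sum_er h1 (fun a => (a : ℝ) ^ 2), sum2]
      have := b_eq b
      rw [this]
      have := (H_pos h2).ne'
      field_simp
      ring)
  rw [int_pow, e] at hr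
  have q : v d 1 b = N0 b d (fun x => x) := by simp [v]
  rw [show N0 b d (fun x => x ^ 3) = v d 3 b from rfl,
    show N0 b d (fun x => x ^ 2) = v d 2 b from rfl, ← q] at hr
  push_cast at hr
  linear_combination hr

lemma v1_a (d : ℕ) : BO d 2 (fun b => v d 1 b + (d + 1 / 2) * H b) :=
  ((BO_p d 1 (fun h => 1 - h) (by fun_prop)).mul (v_crude d 1) (by norm_num)).congr
    fun b h1 h2 => by
      have := v1_rec h1 h2
      linear_combination this

lemma v1_b (d : ℕ) : BO d 5 (fun b => v d 1 b + (d + 1 / 2) * (H b + H b ^ 2 - H b ^ 4)) :=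
  ((BO_p d 4 (fun h => -(1 - h)) (by fun_prop)).mul (v_crude d 1) (by norm_num)).congr
    fun b h1 h2 => by
      have := v1_rec h1 h2
      linear_combination (1 + H b - H b ^ 3) * this

lemma v2_a (d : ℕ) : BO d 2 (v d 2) :=
  (((BO_p d 2 (fun _ => -((d : ℝ) ^ 2 + d + 1 / 3)) (by fun_prop)).add
    ((BO_p d 1 (fun h => 1 - h - 2 * d * h ^ 2) (by fun_prop)).mul (v_crude d 1) (by norm_num))).add
    ((BO_p d 2 (fun h => 1 - h) (by fun_prop)).mul (v_crude d 2) (by norm_num))).congr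
    fun b h1 h2 => by
      have := v2_rec h1 h2
      linear_combination this

lemma v2_b (d : ℕ) : BO d 4 (fun b => v d 2 b + (d ^ 2 + 2 * d + 5 / 6) * H b ^ 2) :=
  ((((BO_p d 1 (fun h => 1 - h) (by fun_prop)).mul (v1_b d) (by norm_num)).add
    (BO_p d 4 (fun h => ((d : ℝ) + 1 / 2) * (1 + h - h ^ 2)) (by fun_prop))).add
    (((BO_p d 3 (fun _ => - 2 * (d : ℝ)) (by fun_prop)).mul (v_crude d 1) (by norm_num)).add
    ((BO_p d 2 (fun h => 1 - h) (by fun_prop)).mul (v2_a d) (by norm_num)))).congr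
    fun b h1 h2 => by
      have := v2_rec h1 h2
      linear_combination this

lemma v3_b (d : ℕ) : BO d 3 (fun b => v d 3 b + (d + 1 / 2) * H b ^ 2) :=
  (((BO_p d 3 (fun _ => -(((d : ℝ) + 1) ^ 4 - d ^ 4) / 4) (by fun_prop)).add
    ((BO_p d 1 (fun _ => 1) (by fun_prop)).mul (v1_a d) (by norm_num))).add
    (((BO_p d 2 (fun h => (- 3 + h) / 2 - 3 * d ^ 2 * h ^ 2) (by fun_prop)).mul (v_crude d 1) (by norm_num)).add
    (((BO_p d 2 (fun h => 3 / 2 * (1 - h) - 3 * d * h ^ 2) (by fun_prop)).mul (v2_a d) (by norm_num)).add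
    ((BO_p d 3 (fun h => 1 - h) (by fun_prop)).mul (v_crude d 3) (by norm_num))))).congr
    fun b h1 h2 => by
      have := v3_rec h1 h2
      linear_combination this

lemma v4_b (d : ℕ) : BO d 2 (v d 4) := by
  have h : BO d 2 (fun b => N0 b d (P b d (fun x => x ^ 4))) := by
    refine ⟨(2 * d + 4) * (4 : ℕ), fun b h1 h2 =>
      (N0_lip h2 h1 _ _ ((Lp_pow 4).P h1)).trans (le_of_eq ?_)⟩
    unfold H; ring
  refine ((BO_p d 2 (fun h => - h ^ 2 * (((d + 1 : ℝ) ^ 5 - d ^ 5) / 5)) (by fun_prop)).add h).congr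
    fun b h1 h2 => ?_
  have hr := N0_rec h2 h1 (Lp_pow 4)
  rw [int_pow] at hr
  rw [v, hr]
  push_cast
  ring

lemma w1_rec {b : ℕ} (h1 : d < b) (h2 : 2 ≤ b) :
    w d 1 b = (H b - H b ^ 2) * w d 1 b + H b ^ 2 * v d 1 b := by
  have hr := N1_rec h2 h1 (Lp_pow 1)
  have e := (Fn1 h2 h1).expand_exact (N1_lip h2 h1) (f := P b d (fun x => x ^ 1))
    (H b ^ 2 * ∑ a ∈ (Finset.range b).erase d, (a : ℝ)) (H b - H b ^ 2) 0 0 0 (by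
      intro x
      simp only [P, pow_one, ← Finset.sum_div, Finset.sum_add_distrib, Finset.sum_const,
        nsmul_eq_mul, card_erase h1]
      have := bH h2
      unfold H at *
      field_simp
      ring)
  have e' := (Fn0 h2 h1).expand_exact (N0_lip h2 h1) (f := D b d (fun x => x ^ 1))
    (d * H b) (H b) 0 0 0 (by intro x; unfold D H; ring)
  rw [e, e'] at hr
  have q : w d 1 b = N1 b d (fun x => x) := by simp [w]
  have q' : v d 1 b = N0 b d (fun x => x) := by simp [v]
  rw [show N1 b d (fun x => x ^ 1) = w d 1 b from rfl, ← q, ← q',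
    show (1 : ℝ) / b = H b from rfl] at hr
  linear_combination hr

lemma w1_b (d : ℕ) : BO d 5 (fun b => w d 1 b + (d + 1 / 2) * (H b ^ 3 + 2 * H b ^ 4)) := by
  have a : BO d 4 (fun b => w d 1 b + (d + 1 / 2) * H b ^ 3) :=
    (((BO_p d 2 (fun _ => 1) (by fun_prop)).mul (v1_a d) (by norm_num)).add
      ((BO_p d 1 (fun h => 1 - h) (by fun_prop)).mul (w_crude d 1) (by norm_num))).congr
      fun b h1 h2 => by linear_combination w1_rec h1 h2
  exact ((((BO_p d 2 (fun _ => 1) (by fun_prop)).mul (v1_b d) (by norm_num)).add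
      (BO_p d 5 (fun h => ((d : ℝ) + 1 / 2) * h) (by fun_prop))).add
      (((BO_p d 1 (fun _ => 1) (by fun_prop)).mul a (by norm_num)).add
      ((BO_p d 2 (fun _ => -1) (by fun_prop)).mul (w_crude d 1) (by norm_num)))).congr
      fun b h1 h2 => by linear_combination w1_rec h1 h2

lemma w2_b (d : ℕ) : BO d 4 (w d 2) := by
  have h : BO d 4 (fun b => N1 b d (P b d (fun x => x ^ 2))) := by
    refine ⟨(8 * d + 18) * (2 : ℕ), fun b h1 h2 =>
      (N1_lip h2 h1 _ _ ((Lp_pow 2).P h1)).trans (le_of_eq ?_)⟩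
    unfold H; ring
  refine ((((BO_p d 3 (fun _ => 2 * d) (by fun_prop)).mul (v_crude d 1) (by norm_num)).add
    ((BO_p d 3 (fun _ => 1) (by fun_prop)).mul (v_crude d 2) (by norm_num))).add h).congr
    fun b h1 h2 => ?_
  have hr := N1_rec h2 h1 (Lp_pow 2)
  have e' := (Fn0 h2 h1).expand_exact (N0_lip h2 h1) (f := D b d (fun x => x ^ 2))
    (d ^ 2 * H b ^ 2) (2 * d * H b ^ 2) (H b ^ 2) 0 0 (by intro x; unfold D H; ring)
  have q' : v d 1 b = N0 b d (fun x => x) := by simp [v]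
  rw [e', ← q'] at hr
  rw [w, hr]
  unfold v H
  ring
end Irw

namespace Irw

lemma Lp.mul {L L' M M' : ℝ} {f g : ℝ → ℝ} (hf : Lp L f) (hg : Lp L' g) (bf : Bd M f)
    (bg : Bd M' g) : Lp (M * L' + M' * L) (fun x => f x * g x) := by
  intro x y a1 a2 a3 a4
  have e : f x * g x - f y * g y = f x * (g x - g y) + g y * (f x - f y) := by ring
  show |f x * g x - f y * g y| ≤ _
  rw [e]
  refine (abs_add_le _ _).trans ?_
  rw [abs_mul, abs_mul]
  have h1 := bf x a1 a2
  have h2 := bg y a3 a4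
  have h3 := hf x y a1 a2 a3 a4
  have h4 := hg x y a1 a2 a3 a4
  have h5 := mul_le_mul h1 h4 (abs_nonneg _) ((abs_nonneg _).trans h1)
  have h6 := mul_le_mul h2 h3 (abs_nonneg _) ((abs_nonneg _).trans h2)
  linarith

lemma Lp_epow (e : ℝ) (he : 0 ≤ e) (k : ℕ) : Lp (k * (e + 1) ^ k) (fun x => (e + x) ^ k) := by
  induction k with
  | zero => simpa using Lp_const 1
  | succ k ih =>
    have l1 : Lp 1 (fun x : ℝ => e + x) := by
      intro x y _ _ _ _
      simp
    have b1 : Bd (e + 1) (fun x : ℝ => e + x) := by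
      intro x h0 h1
      rw [abs_of_nonneg (by positivity)]; linarith
    have bk : Bd ((e + 1) ^ k) (fun x : ℝ => (e + x) ^ k) := by
      intro x h0 h1
      beta_reduce
      rw [abs_of_nonneg (by positivity)]
      gcongr
    have := ih.mul l1 bk b1
    simp only [pow_succ]
    refine this.mono ?_
    have : (e + 1) ^ k ≤ (e + 1) ^ k * (e + 1) := by
      have : 0 ≤ (e + 1) ^ k := by positivity
      nlinarith
    push_cast
    linarith

lemma rem_id (u t : ℝ) (hu : u ≠ 0) (ht : u + t ≠ 0) (J : ℕ) :
    1 / (u + t) - ∑ j ∈ Finset.range J, (-1) ^ j * t ^ j / u ^ (j + 1)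
      = (-1) ^ J * (t ^ J * (1 / (u ^ J * (u + t)))) := by
  induction J with
  | zero => simp
  | succ J ih =>
    rw [Finset.sum_range_succ, ← sub_sub, ih]
    field_simp
    ring

lemma Lp_rem {u h e : ℝ} (hu : 1 ≤ u) (h0 : 0 ≤ h) (h1 : h ≤ 1) (he : 0 ≤ e) (J : ℕ) (hJ : 1 ≤ J) :
    Lp ((J + 1) * (e + 1) ^ J * h ^ J / u ^ 2) (fun x => 1 / (u + (e + x) * h)
      - ∑ j ∈ Finset.range J, (-1) ^ j * ((e + x) * h) ^ j / u ^ (j + 1)) := by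
  have hu0 : 0 < u := by linarith
  have bk : Bd ((e + 1) ^ J) (fun x : ℝ => (e + x) ^ J) := by
    intro x h0 h1
    beta_reduce
    rw [abs_of_nonneg (by positivity)]
    gcongr
  have bq : Bd (1 / u ^ 2) (fun x => 1 / (u ^ J * (u + (e + x) * h))) := by
    intro x a0 a1
    beta_reduce
    rw [abs_of_nonneg (by positivity)]
    have : u ^ 1 ≤ u ^ J := pow_le_pow_right₀ hu hJ
    have h2 : u ≤ u + (e + x) * h := by
      have : 0 ≤ (e + x) * h := by positivity
      linarith
    gcongr
    calc u ^ 2 = u ^ 1 * u := by ring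
      _ ≤ _ := by gcongr
  have lq : Lp (1 / u ^ 2) (fun x => 1 / (u ^ J * (u + (e + x) * h))) := by
    intro x y a0 a1 a2 a3
    have p1 : 0 ≤ (e + x) * h := by positivity
    have p2 : 0 ≤ (e + y) * h := by positivity
    have p3 : u ≤ u + (e + x) * h := by linarith
    have p4 : u ≤ u + (e + y) * h := by linarith
    have p5 : 1 ≤ u ^ J := one_le_pow₀ hu
    have e1 : 1 / (u ^ J * (u + (e + x) * h)) - 1 / (u ^ J * (u + (e + y) * h))
        = h / (u ^ J * (u + (e + x) * h) * (u + (e + y) * h)) * (y - x) := by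
      have : u + (e + x) * h ≠ 0 := by linarith
      have : u + (e + y) * h ≠ 0 := by linarith
      field_simp
      ring
    rw [e1, abs_mul, abs_sub_comm y x, abs_of_nonneg (by positivity)]
    gcongr
    calc u ^ 2 = 1 * u * u := by ring
      _ ≤ _ := by gcongr
  have := (((Lp_epow e he J).mul lq bk bq)).mul_left ((-1) ^ J * h ^ J)
  have e2 : ∀ x, 0 ≤ x → (-1) ^ J * h ^ J * ((e + x) ^ J * (1 / (u ^ J * (u + (e + x) * h))))
      = 1 / (u + (e + x) * h)
      - ∑ j ∈ Finset.range J, (-1) ^ j * ((e + x) * h) ^ j / u ^ (j + 1) := by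
    intro x hx
    rw [rem_id u _ hu0.ne' (by positivity), mul_pow]
    ring
  intro x y a0 a1 a2 a3
  show |(1 / (u + (e + x) * h)
      - ∑ j ∈ Finset.range J, (-1) ^ j * ((e + x) * h) ^ j / u ^ (j + 1)) - (1 / (u + (e + y) * h)
      - ∑ j ∈ Finset.range J, (-1) ^ j * ((e + y) * h) ^ j / u ^ (j + 1))| ≤ _
  rw [← e2 x a0, ← e2 y a2]
  refine (this x y a0 a1 a2 a3).trans (le_of_eq ?_)
  rw [abs_mul, abs_pow, abs_neg, abs_one, one_pow, abs_of_nonneg (by positivity : 0 ≤ h ^ J)]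
  ring

lemma ff_lp {d : ℕ} (hd0 : 1 ≤ d) : Lp 1 (ff d) := by
  have hd1 : (1 : ℝ) ≤ d := by exact_mod_cast hd0
  intro x y a0 a1 a2 a3
  unfold ff
  have e1 : 1 / ((d : ℝ) + x) - 1 / (d + y) = 1 / ((d + x) * (d + y)) * (y - x) := by
    have : (d : ℝ) + x ≠ 0 := by linarith
    have : (d : ℝ) + y ≠ 0 := by linarith
    field_simp
    ring
  rw [e1, abs_mul, abs_sub_comm y x, abs_of_nonneg (by positivity)]
  gcongr
  rw [div_le_one (by positivity)]
  nlinarith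

/-- the defect functional -/
noncomputable def Ef (b d : ℕ) (f : ℝ → ℝ) : ℝ := f 0 - ∫ x in (0 : ℝ)..1, D b d f x

lemma FnE {b d : ℕ} (hd : d < b) : Fn (Ef b d) where
  lin L L' f g c e hf hg := by
    unfold Ef
    have : ∀ x, D b d (fun x => c * f x + e * g x) x = c * D b d f x + e * D b d g x := fun _ => rfl
    simp only [this]
    rw [int_lin (f := D b d f) (g := D b d g) (hf.comp hd) (hg.comp hd)]; ring
  one := by
    unfold Ef D
    simp

lemma Fn.expand5 {N : (ℝ → ℝ) → ℝ} (hN : Fn N) {L : ℝ} {f g : ℝ → ℝ}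
    (c0 c1 c2 c3 c4 c5 : ℝ) (h : Lp L g)
    (hfg : f = (fun x => c0 + c1 * x + c2 * x ^ 2 + c3 * x ^ 3 + c4 * x ^ 4 + c5 * x ^ 5 + g x)) :
    N f = c1 * N (fun x => x ^ 1) + c2 * N (fun x => x ^ 2) + c3 * N (fun x => x ^ 3)
      + c4 * N (fun x => x ^ 4) + c5 * N (fun x => x ^ 5) + N g := by
  have q5 := (Lp_pow 5).lin h c5 1
  have q4 := (Lp_pow 4).lin q5 c4 1
  have q3 := (Lp_pow 3).lin q4 c3 1
  have q2 := (Lp_pow 2).lin q3 c2 1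
  have q1 := (Lp_pow 1).lin q2 c1 1
  have e0 := hN.lin _ _ _ _ c0 1 (Lp_const 1) q1
  rw [hN.lin _ _ _ _ c1 1 (Lp_pow 1) q2, hN.lin _ _ _ _ c2 1 (Lp_pow 2) q3,
    hN.lin _ _ _ _ c3 1 (Lp_pow 3) q4, hN.lin _ _ _ _ c4 1 (Lp_pow 4) q5,
    hN.lin _ _ _ _ c5 1 (Lp_pow 5) h, hN.one] at e0
  have e1 : (fun x => c0 * 1 + 1 * (c1 * x ^ 1 + 1 * (c2 * x ^ 2 + 1 * (c3 * x ^ 3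
      + 1 * (c4 * x ^ 4 + 1 * (c5 * x ^ 5 + 1 * g x))))))  = f := by
    rw [hfg]; funext x; ring
  rw [e1] at e0
  rw [e0]
  ring

lemma Ef_ff {d : ℕ} (hd0 : 1 ≤ d) : BO d 6 (fun b => Ef b d (ff d)
    - ((((d : ℝ) + 1) ^ 2 - d ^ 2) / 2 / d ^ 2 * H b - (((d : ℝ) + 1) ^ 3 - d ^ 3) / 3 / d ^ 3 * H b ^ 2
      + (((d : ℝ) + 1) ^ 4 - d ^ 4) / 4 / d ^ 4 * H b ^ 3
      - (((d : ℝ) + 1) ^ 5 - d ^ 5) / 5 / d ^ 5 * H b ^ 4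
      + (((d : ℝ) + 1) ^ 6 - d ^ 6) / 6 / d ^ 6 * H b ^ 5)) := by
  have hd1 : (1 : ℝ) ≤ d := by exact_mod_cast hd0
  have hdp : (0 : ℝ) < d := by linarith
  refine ⟨((d : ℝ) + 1) ^ 6, fun b h1 h2 => ?_⟩
  set g : ℝ → ℝ := fun x => 1 / ((d : ℝ) + (0 + x) * 1)
      - ∑ j ∈ Finset.range 6, (-1) ^ j * ((0 + x) * 1) ^ j / (d : ℝ) ^ (j + 1) with hg
  have lg := Lp_rem hd1 zero_le_one le_rfl le_rfl 6 (by norm_num)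
  have hx := (FnE h1).expand5 (f := ff d) (g := g) (1 / d) (-1 / d ^ 2) (1 / d ^ 3) (-1 / d ^ 4)
    (1 / d ^ 5) (-1 / d ^ 6) lg (by
      funext x
      simp only [hg, ff, Finset.sum_range_succ, Finset.sum_range_zero]
      ring)
  have hp : ∀ k : ℕ, 1 ≤ k → Ef b d (fun x => x ^ k)
      = - (H b ^ k * (((d + 1 : ℝ) ^ (k + 1) - d ^ (k + 1)) / (k + 1))) := by
    intro k hk
    unfold Ef
    rw [int_pow]
    beta_reduce
    rw [zero_pow (by omega), zero_sub]
  rw [hp 1 (by norm_num), hp 2 (by norm_num), hp 3 (by norm_num), hp 4 (by norm_num),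
    hp 5 (by norm_num)] at hx
  push_cast at hx
  have e : Ef b d (ff d)
    - ((((d : ℝ) + 1) ^ 2 - d ^ 2) / 2 / d ^ 2 * H b - (((d : ℝ) + 1) ^ 3 - d ^ 3) / 3 / d ^ 3 * H b ^ 2
      + (((d : ℝ) + 1) ^ 4 - d ^ 4) / 4 / d ^ 4 * H b ^ 3
      - (((d : ℝ) + 1) ^ 5 - d ^ 5) / 5 / d ^ 5 * H b ^ 4
      + (((d : ℝ) + 1) ^ 6 - d ^ 6) / 6 / d ^ 6 * H b ^ 5) = Ef b d g := by
    rw [hx]; ring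
  beta_reduce
  rw [e]
  have gv : ∀ x, 0 ≤ x → g x = x ^ 6 * (1 / ((d : ℝ) ^ 6 * (d + x))) := by
    intro x hx
    have := rem_id (d : ℝ) x hdp.ne' (by positivity) 6
    simp only [hg, zero_add, mul_one]
    rw [this]; ring
  have g0 : g 0 = 0 := by rw [gv 0 le_rfl]; ring
  have := intervalIntegral.norm_integral_le_of_norm_le_const (a := 0) (b := 1)
    (C := ((d : ℝ) + 1) ^ 6 * H b ^ 6) (f := D b d g) (by
      intro x hx
      rw [Set.uIoc_of_le zero_le_one] at hx
      have hm := mem01 h1 hx.1.le hx.2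
      have hx0 : 0 ≤ x := hx.1.le
      rw [D, gv _ hm.1, Real.norm_eq_abs, abs_mul, abs_of_nonneg (pow_nonneg hm.1 6),
        abs_of_nonneg (by positivity)]
      have : 1 / ((d : ℝ) ^ 6 * (d + (d + x) / b)) ≤ 1 := by
        rw [div_le_one (by positivity)]
        calc (1 : ℝ) = 1 ^ 6 * 1 := by norm_num
          _ ≤ _ := by gcongr; linarith
      calc _ ≤ ((d + x) / (b : ℝ)) ^ 6 * 1 := by
            refine mul_le_mul_of_nonneg_left this (pow_nonneg hm.1 6)
        _ = (d + x) ^ 6 * H b ^ 6 := by unfold H; ring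
        _ ≤ _ := by
          have := (H_pos h2).le
          have := hx.1.le
          gcongr
          exact hx.2)
  unfold Ef
  rw [g0, zero_sub, abs_neg]
  simpa using this

/-- generic telescoping -/
lemma tele {b : ℕ} (h2 : 2 ≤ b) (g G : ℝ → ℝ) (E : ℝ)
    (hE : ∀ u, 1 ≤ u → |H b * g u - (G u - G (u + H b))| ≤ E) (n : ℝ) (hn : 1 ≤ n) :
    |H b * ∑ a ∈ Finset.range b, g (n + a * H b) - (G n - G (n + 1))| ≤ b * E := by
  have hH := H_pos h2
  have key : ∀ m : ℕ, |H b * ∑ a ∈ Finset.range m, g (n + a * H b) - (G n - G (n + m * H b))|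
      ≤ m * E := by
    intro m
    induction m with
    | zero => simp
    | succ m ih =>
      rw [Finset.sum_range_succ]
      have h3 : 0 ≤ (m : ℝ) * H b := by positivity
      have := hE (n + m * H b) (by linarith)
      have e : n + ((m + 1 : ℕ) : ℝ) * H b = n + m * H b + H b := by push_cast; ring
      rw [e]
      have e2 : H b * (∑ a ∈ Finset.range m, g (n + a * H b) + g (n + m * H b))
          - (G n - G (n + m * H b + H b))
          = (H b * ∑ a ∈ Finset.range m, g (n + a * H b) - (G n - G (n + m * H b)))
            + (H b * g (n + m * H b) - (G (n + m * H b) - G (n + m * H b + H b))) := by ring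
      rw [e2]
      refine (abs_add_le _ _).trans ?_
      push_cast
      linarith
  have := key b
  rwa [bH h2] at this

lemma tl2 {h : ℝ} (h0 : 0 < h) (h1 : h ≤ 1) (u : ℝ) (hu : 1 ≤ u) :
    |h * (1 / u ^ 2) - ((1 / u + h / (2 * u ^ 2) + h ^ 2 / (6 * u ^ 3))
      - (1 / (u + h) + h / (2 * (u + h) ^ 2) + h ^ 2 / (6 * (u + h) ^ 3)))| ≤ h ^ 5 := by
  have hu0 : 0 < u := by linarith
  have e : h * (1 / u ^ 2) - ((1 / u + h / (2 * u ^ 2) + h ^ 2 / (6 * u ^ 3))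
      - (1 / (u + h) + h / (2 * (u + h) ^ 2) + h ^ 2 / (6 * (u + h) ^ 3)))
      = - (h ^ 5 / (6 * u ^ 3 * (u + h) ^ 3)) := by
    have : u + h ≠ 0 := by positivity
    field_simp
    ring
  rw [e, abs_neg, abs_of_nonneg (by positivity)]
  apply div_le_self (by positivity)
  calc (1 : ℝ) ≤ 6 * 1 ^ 3 * 1 ^ 3 := by norm_num
    _ ≤ _ := by gcongr; linarith

lemma tl3 {h : ℝ} (h0 : 0 < h) (h1 : h ≤ 1) (u : ℝ) (hu : 1 ≤ u) :
    |h * (1 / u ^ 3) - ((1 / (2 * u ^ 2) + h / (2 * u ^ 3))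
      - (1 / (2 * (u + h) ^ 2) + h / (2 * (u + h) ^ 3)))| ≤ 2 * h ^ 3 := by
  have hu0 : 0 < u := by linarith
  have e : h * (1 / u ^ 3) - ((1 / (2 * u ^ 2) + h / (2 * u ^ 3))
      - (1 / (2 * (u + h) ^ 2) + h / (2 * (u + h) ^ 3)))
      = h ^ 3 * ((2 * u + h) / (2 * u ^ 3 * (u + h) ^ 3)) := by
    have : u + h ≠ 0 := by positivity
    field_simp
    ring
  rw [e, abs_of_nonneg (by positivity), mul_comm]
  gcongr
  rw [div_le_iff₀ (by positivity)]
  have a1 : 1 ≤ u ^ 3 := one_le_pow₀ hu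
  have a2 : (u + h) ^ 1 ≤ (u + h) ^ 3 := pow_le_pow_right₀ (by linarith) (by norm_num)
  have : 1 * (u + h) ^ 1 ≤ u ^ 3 * (u + h) ^ 3 := by gcongr
  nlinarith

lemma tl4 {h : ℝ} (h0 : 0 < h) (h1 : h ≤ 1) (u : ℝ) (hu : 1 ≤ u) :
    |h * (1 / u ^ 4) - (1 / (3 * u ^ 3) - 1 / (3 * (u + h) ^ 3))| ≤ 4 * h ^ 2 := by
  have hu0 : 0 < u := by linarith
  have e : h * (1 / u ^ 4) - (1 / (3 * u ^ 3) - 1 / (3 * (u + h) ^ 3))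
      = h ^ 2 * ((6 * u ^ 2 + 8 * u * h + 3 * h ^ 2) / (3 * u ^ 4 * (u + h) ^ 3)) := by
    have : u + h ≠ 0 := by positivity
    field_simp
    ring
  rw [e, abs_of_nonneg (by positivity), mul_comm]
  gcongr
  rw [div_le_iff₀ (by positivity)]
  have a1 : 1 ≤ u ^ 4 := one_le_pow₀ hu
  have a2 : (u + h) ^ 2 ≤ (u + h) ^ 3 := pow_le_pow_right₀ (by linarith) (by norm_num)
  have : 1 * (u + h) ^ 2 ≤ u ^ 4 * (u + h) ^ 3 := by gcongr
  nlinarith [mul_pos hu0 h0, sq_nonneg u, sq_nonneg h]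

end Irw

namespace Irw

noncomputable def S (d s b : ℕ) : ℝ :=
  H b * ∑ a ∈ (Finset.range b).erase d, 1 / ((d : ℝ) + a * H b) ^ s

lemma N0_Pff {d : ℕ} (hd0 : 1 ≤ d) : BO d 6 (fun b => N0 b d (P b d (ff d))
    - (-H b * S d 2 b * v d 1 b + H b ^ 2 * S d 3 b * v d 2 b - H b ^ 3 * S d 4 b * v d 3 b
      + H b ^ 4 * S d 5 b * v d 4 b)) := by
  have hd1 : (1 : ℝ) ≤ d := by exact_mod_cast hd0
  refine ⟨(2 * d + 4) * 6, fun b h1 h2 => ?_⟩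
  have hH := H_pos h2
  have hl : ∀ a : ℕ, Lp (6 * H b ^ 5) (fun x => 1 / (((d : ℝ) + a * H b) + (0 + x) * H b)
      - ∑ j ∈ Finset.range 5, (-1) ^ j * ((0 + x) * H b) ^ j / ((d : ℝ) + a * H b) ^ (j + 1)) := by
    intro a
    have hu : 1 ≤ (d : ℝ) + a * H b := by
      have : 0 ≤ (a : ℝ) * H b := by positivity
      linarith
    refine (Lp_rem hu hH.le (H_le h2) le_rfl 5 (by norm_num)).mono ?_
    rw [div_le_iff₀ (by positivity)]
    have : 1 ≤ ((d : ℝ) + a * H b) ^ 2 := one_le_pow₀ hu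
    have h5 : 0 < H b ^ 5 := by positivity
    norm_num
    nlinarith
  have hs := (Lp.sum ((Finset.range b).erase d) (fun a _ => hl a)).mul_left (H b)
  have hs' : Lp (6 * H b ^ 5) (fun x => P b d (ff d) x - (S d 1 b + (-H b * S d 2 b) * x
      + (H b ^ 2 * S d 3 b) * x ^ 2 + (-H b ^ 3 * S d 4 b) * x ^ 3
      + (H b ^ 4 * S d 5 b) * x ^ 4)) := by
    have e : (fun x => P b d (ff d) x - (S d 1 b + (-H b * S d 2 b) * x
      + (H b ^ 2 * S d 3 b) * x ^ 2 + (-H b ^ 3 * S d 4 b) * x ^ 3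
      + (H b ^ 4 * S d 5 b) * x ^ 4)) = fun x => H b * ∑ a ∈ (Finset.range b).erase d,
        (1 / (((d : ℝ) + a * H b) + (0 + x) * H b)
      - ∑ j ∈ Finset.range 5, (-1) ^ j * ((0 + x) * H b) ^ j / ((d : ℝ) + a * H b) ^ (j + 1)) := by
      funext x
      have e1 : P b d (ff d) x = H b * ∑ a ∈ (Finset.range b).erase d,
          1 / (((d : ℝ) + a * H b) + (0 + x) * H b) := by
        unfold P ff
        rw [show (1 : ℝ) / b = H b from rfl]
        congr 1
        refine Finset.sum_congr rfl fun a _ => ?_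
        congr 1
        unfold H
        ring
      rw [e1]
      unfold S
      rw [Finset.sum_sub_distrib, mul_sub]
      congr 1
      simp only [Finset.sum_range_succ, Finset.sum_range_zero, 
        Finset.mul_sum, Finset.sum_mul, zero_add, ← Finset.sum_add_distrib]
      refine Finset.sum_congr rfl fun a _ => ?_
      ring
    rw [e]
    refine hs.mono ?_
    rw [abs_of_pos hH, Finset.sum_const, nsmul_eq_mul, card_erase h1]
    have hc := bH h2
    have h5 : 0 < 6 * H b ^ 5 := by positivity
    nlinarith
  have := (Fn0 h2 h1).expand (N0_lip h2 h1) _ _ _ _ _ hs'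
  have q' : v d 1 b = N0 b d (fun x => x) := by simp [v]
  rw [← q'] at this
  beta_reduce
  refine le_trans (le_of_eq ?_) (this.trans (le_of_eq ?_))
  · congr 1
    unfold v
    ring
  · unfold H
    ring

lemma S_split {d b : ℕ} (h1 : d < b) (s : ℕ) : S d s b
    = H b * ∑ a ∈ Finset.range b, 1 / ((d : ℝ) + a * H b) ^ s
      - H b * (1 / ((d : ℝ) + d * H b) ^ s) := by
  unfold S
  rw [sum_er h1 (fun a => 1 / ((d : ℝ) + a * H b) ^ s)]
  ring

lemma S2_b {d : ℕ} (hd0 : 1 ≤ d) : BO d 4 (fun b => S d 2 b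
    - ((1 / (d : ℝ) - 1 / (d + 1)) + H b / 2 * (1 / (d : ℝ) ^ 2 - 1 / (d + 1) ^ 2)
      + H b ^ 2 / 6 * (1 / (d : ℝ) ^ 3 - 1 / (d + 1) ^ 3)
      - H b / d ^ 2 * (1 - 2 * H b + 3 * H b ^ 2))) := by
  have hd1 : (1 : ℝ) ≤ d := by exact_mod_cast hd0
  have hdp : (0 : ℝ) < d := by linarith
  have a : BO d 4 (fun b => H b * ∑ a ∈ Finset.range b, 1 / ((d : ℝ) + a * H b) ^ 2
      - ((1 / (d : ℝ) + H b / (2 * d ^ 2) + H b ^ 2 / (6 * d ^ 3))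
      - (1 / ((d : ℝ) + 1) + H b / (2 * (d + 1) ^ 2) + H b ^ 2 / (6 * (d + 1) ^ 3)))) := by
    refine ⟨1, fun b h1 h2 => ?_⟩
    have := tele h2 (fun u => 1 / u ^ 2) (fun u => 1 / u + H b / (2 * u ^ 2) + H b ^ 2 / (6 * u ^ 3))
      (H b ^ 5) (fun u hu => tl2 (H_pos h2) (H_le h2) u hu) d hd1
    refine this.trans (le_of_eq ?_)
    linear_combination H b ^ 4 * bH h2
  have c : BO d 4 (fun b => H b ^ 4 * ((4 + 3 * H b) / (d ^ 2 * (1 + H b) ^ 2))) :=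
    BO_p d 4 (fun h => (4 + 3 * h) / (d ^ 2 * (1 + h) ^ 2)) (by
      refine ContinuousOn.div (by fun_prop) (by fun_prop) fun x hx => ?_
      have := hx.1
      positivity)
  refine (a.add c).congr fun b h1 h2 => ?_
  rw [S_split h1]
  have := H_pos h2
  have e : (d : ℝ) + d * H b = d * (1 + H b) := by ring
  rw [e]
  have e2 : H b * (1 / ((d : ℝ) * (1 + H b)) ^ 2) = H b / d ^ 2 * (1 - 2 * H b + 3 * H b ^ 2)
      - H b ^ 4 * ((4 + 3 * H b) / (d ^ 2 * (1 + H b) ^ 2)) := by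
    field_simp
    ring
  rw [e2]
  generalize (d : ℝ) + 1 = t
  ring

lemma S3_b {d : ℕ} (hd0 : 1 ≤ d) : BO d 2 (fun b => S d 3 b
    - (1 / 2 * (1 / (d : ℝ) ^ 2 - 1 / (d + 1) ^ 2) + H b / 2 * (1 / (d : ℝ) ^ 3 - 1 / (d + 1) ^ 3)
      - H b / d ^ 3)) := by
  have hd1 : (1 : ℝ) ≤ d := by exact_mod_cast hd0
  have hdp : (0 : ℝ) < d := by linarith
  have a : BO d 2 (fun b => H b * ∑ a ∈ Finset.range b, 1 / ((d : ℝ) + a * H b) ^ 3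
      - ((1 / (2 * (d : ℝ) ^ 2) + H b / (2 * d ^ 3))
      - (1 / (2 * ((d : ℝ) + 1) ^ 2) + H b / (2 * (d + 1) ^ 3)))) := by
    refine ⟨2, fun b h1 h2 => ?_⟩
    have := tele h2 (fun u => 1 / u ^ 3) (fun u => 1 / (2 * u ^ 2) + H b / (2 * u ^ 3))
      (2 * H b ^ 3) (fun u hu => tl3 (H_pos h2) (H_le h2) u hu) d hd1
    refine this.trans (le_of_eq ?_)
    linear_combination 2 * H b ^ 2 * bH h2
  have c : BO d 2 (fun b => H b ^ 2 * ((3 + 3 * H b + H b ^ 2) / (d ^ 3 * (1 + H b) ^ 3))) :=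
    BO_p d 2 (fun h => (3 + 3 * h + h ^ 2) / (d ^ 3 * (1 + h) ^ 3)) (by
      refine ContinuousOn.div (by fun_prop) (by fun_prop) fun x hx => ?_
      have := hx.1
      positivity)
  refine (a.add c).congr fun b h1 h2 => ?_
  rw [S_split h1]
  have := H_pos h2
  have e : (d : ℝ) + d * H b = d * (1 + H b) := by ring
  rw [e]
  have e2 : H b * (1 / ((d : ℝ) * (1 + H b)) ^ 3) = H b / d ^ 3
      - H b ^ 2 * ((3 + 3 * H b + H b ^ 2) / (d ^ 3 * (1 + H b) ^ 3)) := by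
    field_simp
    ring
  rw [e2]
  generalize (d : ℝ) + 1 = t
  ring

lemma S4_b {d : ℕ} (hd0 : 1 ≤ d) : BO d 1 (fun b => S d 4 b
    - 1 / 3 * (1 / (d : ℝ) ^ 3 - 1 / (d + 1) ^ 3)) := by
  have hd1 : (1 : ℝ) ≤ d := by exact_mod_cast hd0
  have hdp : (0 : ℝ) < d := by linarith
  have a : BO d 1 (fun b => H b * ∑ a ∈ Finset.range b, 1 / ((d : ℝ) + a * H b) ^ 4
      - (1 / (3 * (d : ℝ) ^ 3) - 1 / (3 * ((d : ℝ) + 1) ^ 3))) := by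
    refine ⟨4, fun b h1 h2 => ?_⟩
    have := tele h2 (fun u => 1 / u ^ 4) (fun u => 1 / (3 * u ^ 3))
      (4 * H b ^ 2) (fun u hu => tl4 (H_pos h2) (H_le h2) u hu) d hd1
    refine this.trans (le_of_eq ?_)
    linear_combination 4 * H b * bH h2
  have c : BO d 1 (fun b => H b ^ 1 * (1 / (d * (1 + H b)) ^ 4)) :=
    BO_p d 1 (fun h => 1 / (d * (1 + h)) ^ 4) (by
      refine ContinuousOn.div (by fun_prop) (by fun_prop) fun x hx => ?_
      have := hx.1
      positivity)
  refine (a.sub c).congr fun b h1 h2 => ?_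
  rw [S_split h1]
  have e : (d : ℝ) + d * H b = d * (1 + H b) := by ring
  rw [e]
  generalize (d : ℝ) + 1 = t
  ring

lemma S5_b {d : ℕ} (hd0 : 1 ≤ d) : BO d 0 (S d 5) := by
  have hd1 : (1 : ℝ) ≤ d := by exact_mod_cast hd0
  refine ⟨1, fun b h1 h2 => ?_⟩
  have hH := H_pos h2
  unfold S
  rw [abs_of_nonneg (by positivity)]
  have : ∑ a ∈ (Finset.range b).erase d, 1 / ((d : ℝ) + a * H b) ^ 5
      ≤ ∑ a ∈ (Finset.range b).erase d, (1 : ℝ) := by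
    refine Finset.sum_le_sum fun a _ => ?_
    rw [div_le_one (by positivity)]
    apply one_le_pow₀
    have : 0 ≤ (a : ℝ) * H b := by positivity
    linarith
  rw [Finset.sum_const, nsmul_eq_mul, card_erase h1] at this
  have hb := bH h2
  simp only [pow_zero, mul_one] at *
  nlinarith

noncomputable def s2 (d h : ℝ) : ℝ := (1 / d - 1 / (d + 1)) + h / 2 * (1 / d ^ 2 - 1 / (d + 1) ^ 2)
      + h ^ 2 / 6 * (1 / d ^ 3 - 1 / (d + 1) ^ 3) - h / d ^ 2 * (1 - 2 * h + 3 * h ^ 2)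
noncomputable def s3 (d h : ℝ) : ℝ := 1 / 2 * (1 / d ^ 2 - 1 / (d + 1) ^ 2)
      + h / 2 * (1 / d ^ 3 - 1 / (d + 1) ^ 3) - h / d ^ 3
noncomputable def s4 (d : ℝ) : ℝ := 1 / 3 * (1 / d ^ 3 - 1 / (d + 1) ^ 3)
noncomputable def ep (d h : ℝ) : ℝ := ((d + 1) ^ 2 - d ^ 2) / 2 / d ^ 2 * h
      - ((d + 1) ^ 3 - d ^ 3) / 3 / d ^ 3 * h ^ 2
      + ((d + 1) ^ 4 - d ^ 4) / 4 / d ^ 4 * h ^ 3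
      - ((d + 1) ^ 5 - d ^ 5) / 5 / d ^ 5 * h ^ 4
      + ((d + 1) ^ 6 - d ^ 6) / 6 / d ^ 6 * h ^ 5

noncomputable def p0 (d h : ℝ) : ℝ := ep d h + h * s2 d h * ((d + 1 / 2) * (h + h ^ 2 - h ^ 4))
  - h ^ 2 * s3 d h * ((d ^ 2 + 2 * d + 5 / 6) * h ^ 2) + h ^ 3 * s4 d * ((d + 1 / 2) * h ^ 2)

lemma N0_ff {d : ℕ} (hd0 : 1 ≤ d) : BO d 6 (fun b => N0 b d (ff d) - p0 d (H b)) := by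
  have c2 : Continuous (s2 d) := by unfold s2; fun_prop
  have c3 : Continuous (s3 d) := by unfold s3; fun_prop
  have t1 := (((BO_H d 1).mul (S2_b hd0) (le_refl 5)).mul (v_crude d 1) (le_refl 6))
  have t2 := ((BO_p d 1 (s2 d) c2.continuousOn).mul (v1_b d) (le_refl 6))
  have t3 := (((BO_H d 2).mul (S3_b hd0) (le_refl 4)).mul (v2_a d) (le_refl 6))
  have t4 := ((BO_p d 2 (s3 d) c3.continuousOn).mul (v2_b d) (le_refl 6))
  have v3a : BO d 2 (v d 3) := (((v3_b d).mono (by norm_num : 2 ≤ 3)).sub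
    (BO_p d 2 (fun _ => (d : ℝ) + 1 / 2) (by fun_prop))).congr fun b _ _ => by ring
  have t5 := (((BO_H d 3).mul (S4_b hd0) (le_refl 4)).mul v3a (le_refl 6))
  have t6 := ((BO_p d 3 (fun _ => s4 d) continuousOn_const).mul (v3_b d) (le_refl 6))
  have t7 := (((BO_H d 4).mul (S5_b hd0) (le_refl 4)).mul (v4_b d) (le_refl 6))
  refine (((Ef_ff hd0).add (N0_Pff hd0)).add ((((t3.add t4).sub (t1.add t2)).sub
    (t5.add t6)).add t7)).congr fun b h1 h2 => ?_
  have hr : N0 b d (ff d) = Ef b d (ff d) + N0 b d (P b d (ff d)) := N0_rec h2 h1 (ff_lp hd0)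
  rw [hr]
  unfold p0 ep s2 s3 s4
  ring

end Irw

namespace Irw

lemma NZ_sum {b d : ℕ} (hd0 : 1 ≤ d) (h1 : d < b) (g : ℕ → ℝ) :
    ∑ n ∈ NZ b d, g n = ∑ i ∈ Finset.range (b - 1), g (i + 1) - g d := by
  have hb : b = (b - 1) + 1 := by omega
  have m0 : 0 ∈ Finset.range b := by simp; omega
  have md : d ∈ (Finset.range b).erase 0 := by simp; omega
  have e1 := Finset.add_sum_erase _ g md
  have e2 := Finset.add_sum_erase _ g m0
  have e3 : ∑ n ∈ Finset.range b, g n = ∑ i ∈ Finset.range (b - 1), g (i + 1) + g 0 := by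
    conv_lhs => rw [hb]
    exact Finset.sum_range_succ' g (b - 1)
  unfold NZ
  linarith

lemma zeta_tail {s : ℕ} (hs : 2 ≤ s) (G E : ℕ → ℝ) (hG : Tendsto G atTop (nhds 0))
    (hE : Tendsto E atTop (nhds 0))
    (h : ∀ n : ℕ, 1 ≤ n → |1 / (n : ℝ) ^ s - (G n - G (n + 1))| ≤ E n - E (n + 1)) (m : ℕ) :
    |zetaR s - ∑ i ∈ Finset.range m, 1 / (((i + 1 : ℕ) : ℝ)) ^ s - G (m + 1)| ≤ E (m + 1) := by
  have key : ∀ k, |∑ i ∈ Finset.range (m + k), 1 / (((i + 1 : ℕ) : ℝ)) ^ s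
      - ∑ i ∈ Finset.range m, 1 / (((i + 1 : ℕ) : ℝ)) ^ s - (G (m + 1) - G (m + k + 1))|
      ≤ E (m + 1) - E (m + k + 1) := by
    intro k
    induction k with
    | zero => simp
    | succ k ih =>
      rw [← add_assoc, Finset.sum_range_succ]
      have := h (m + k + 1) (by omega)
      rw [abs_le] at *
      constructor <;> linarith [this.1, this.2, ih.1, ih.2]
  have hsum : Summable (fun i : ℕ => 1 / (((i + 1 : ℕ) : ℝ)) ^ s) :=
    (summable_nat_add_iff (f := fun n : ℕ => 1 / (n : ℝ) ^ s) 1).2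
      (Real.summable_one_div_nat_pow.2 (by omega))
  have hz : zetaR s = ∑' i : ℕ, 1 / (((i + 1 : ℕ) : ℝ)) ^ s := by
    unfold zetaR; push_cast; rfl
  have ht := hsum.hasSum.tendsto_sum_nat
  rw [← hz] at ht
  have sh : Tendsto (fun k => m + k) atTop atTop := tendsto_atTop_mono (fun k => by simp only [id]; omega) tendsto_id
  have sh1 : Tendsto (fun k => m + k + 1) atTop atTop :=
    tendsto_atTop_mono (fun k => by simp only [id]; omega) tendsto_id
  have l1 := (((ht.comp sh).sub_const (∑ i ∈ Finset.range m, 1 / (((i + 1 : ℕ) : ℝ)) ^ s)).sub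
    ((hG.comp sh1).const_sub (G (m + 1)))).abs
  have l2 := (hE.comp sh1).const_sub (E (m + 1))
  have := le_of_tendsto_of_tendsto' l1 l2 (fun k => key k)
  simpa using this

noncomputable def Z (d s b : ℕ) : ℝ := ∑ n ∈ NZ b d, 1 / (n : ℝ) ^ s

lemma tz (k : ℕ) (hk : k ≠ 0) (c : ℝ) : Tendsto (fun n : ℕ => c / (n : ℝ) ^ k) atTop (nhds 0) := by
  exact tendsto_const_nhds.div_atTop
    ((tendsto_pow_atTop hk).comp (tendsto_natCast_atTop_atTop (R := ℝ)))

lemma Z_eq {b d : ℕ} (hd0 : 1 ≤ d) (h1 : d < b) (s : ℕ) : Z d s b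
    = ∑ i ∈ Finset.range (b - 1), 1 / (((i + 1 : ℕ) : ℝ)) ^ s - 1 / (d : ℝ) ^ s :=
  NZ_sum hd0 h1 (fun n => 1 / (n : ℝ) ^ s)

lemma Z2_b {d : ℕ} (hd0 : 1 ≤ d) : BO d 3 (fun b => Z d 2 b
    - (zetaR 2 - 1 / (d : ℝ) ^ 2 - H b - H b ^ 2 / 2)) := by
  have a : BO d 3 (fun b => zetaR 2 - (Z d 2 b + 1 / (d : ℝ) ^ 2)
      - (H b + H b ^ 2 / 2 + H b ^ 3 / 6)) := by
    refine ⟨1, fun b h1 h2 => ?_⟩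
    have := zeta_tail (s := 2) le_rfl
      (fun n => 1 / (n : ℝ) ^ 1 + (1 / 2) / (n : ℝ) ^ 2 + (1 / 6) / (n : ℝ) ^ 3)
      (fun n => 1 / (n : ℝ) ^ 3)
      (by simpa using ((tz 1 (by norm_num) 1).add (tz 2 (by norm_num) (1 / 2))).add
            (tz 3 (by norm_num) (1 / 6)))
      (tz 3 (by norm_num) 1) (by
        intro n hn
        have hn : (1 : ℝ) ≤ n := by exact_mod_cast hn
        have hn0 : (0 : ℝ) < n := by linarith
        push_cast
        have e : 1 / (n : ℝ) ^ 2 - (1 / (n : ℝ) ^ 1 + (1 / 2) / (n : ℝ) ^ 2 + (1 / 6) / (n : ℝ) ^ 3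
          - (1 / ((n : ℝ) + 1) ^ 1 + (1 / 2) / ((n : ℝ) + 1) ^ 2 + (1 / 6) / ((n : ℝ) + 1) ^ 3))
          = - (1 / (6 * (n : ℝ) ^ 3 * (n + 1) ^ 3)) := by field_simp; ring
        rw [e, abs_neg, abs_of_pos (by positivity)]
        have e2 : 1 / (n : ℝ) ^ 3 - 1 / ((n : ℝ) + 1) ^ 3
          = (18 * (n : ℝ) ^ 2 + 18 * n + 6) / (6 * (n : ℝ) ^ 3 * (n + 1) ^ 3) := by
          field_simp; ring
        rw [e2]
        gcongr
        nlinarith) (b - 1)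
    rw [show b - 1 + 1 = b by omega] at this
    beta_reduce
    rw [Z_eq hd0 h1]
    refine le_trans (le_of_eq ?_) (this.trans (le_of_eq ?_))
    · congr 1
      unfold H
      ring
    · unfold H
      ring
  refine ((BO_p d 3 (fun _ => - (1 / 6)) (by fun_prop)).sub a).congr fun b h1 h2 => ?_
  ring

lemma Z3_b {d : ℕ} (hd0 : 1 ≤ d) : BO d 2 (fun b => Z d 3 b - (zetaR 3 - 1 / (d : ℝ) ^ 3)) := by
  have a : BO d 2 (fun b => zetaR 3 - (Z d 3 b + 1 / (d : ℝ) ^ 3)) := by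
    refine ⟨2, fun b h1 h2 => ?_⟩
    have := zeta_tail (s := 3) (by norm_num) (fun n => 0)
      (fun n => 2 / (n : ℝ) ^ 2) tendsto_const_nhds
      (tz 2 (by norm_num) 2) (by
        intro n hn
        have hn : (1 : ℝ) ≤ n := by exact_mod_cast hn
        have hn0 : (0 : ℝ) < n := by linarith
        push_cast
        rw [sub_zero, sub_zero, abs_of_pos (by positivity)]
        have e2 : 2 / (n : ℝ) ^ 2 - 2 / ((n : ℝ) + 1) ^ 2
          = (2 * (2 * n + 1) * n) / ((n : ℝ) + 1) ^ 2 * (1 / n ^ 3) := by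
          field_simp; ring
        rw [e2]
        have : 1 ≤ (2 * (2 * n + 1) * n) / ((n : ℝ) + 1) ^ 2 := by
          rw [le_div_iff₀ (by positivity)]
          nlinarith
        have h3 : 0 < 1 / (n : ℝ) ^ 3 := by positivity
        nlinarith) (b - 1)
    rw [show b - 1 + 1 = b by omega] at this
    beta_reduce
    rw [Z_eq hd0 h1]
    refine le_trans (le_of_eq ?_) (this.trans (le_of_eq ?_))
    · congr 1
      ring
    · unfold H
      ring
  refine a.neg.congr fun b h1 h2 => ?_
  ring

lemma Z4_b {d : ℕ} (hd0 : 1 ≤ d) : BO d 1 (fun b => Z d 4 b - (zetaR 4 - 1 / (d : ℝ) ^ 4)) := by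
  have a : BO d 1 (fun b => zetaR 4 - (Z d 4 b + 1 / (d : ℝ) ^ 4)) := by
    refine ⟨2, fun b h1 h2 => ?_⟩
    have := zeta_tail (s := 4) (by norm_num) (fun n => 0)
      (fun n => 2 / (n : ℝ) ^ 1) tendsto_const_nhds
      (tz 1 (by norm_num) 2) (by
        intro n hn
        have hn : (1 : ℝ) ≤ n := by exact_mod_cast hn
        have hn0 : (0 : ℝ) < n := by linarith
        push_cast
        rw [sub_zero, sub_zero, abs_of_pos (by positivity)]
        have e2 : 2 / (n : ℝ) ^ 1 - 2 / ((n : ℝ) + 1) ^ 1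
          = (2 * n ^ 3) / ((n : ℝ) + 1) * (1 / n ^ 4) := by
          field_simp; ring
        rw [e2]
        have : 1 ≤ (2 * (n : ℝ) ^ 3) / ((n : ℝ) + 1) := by
          rw [le_div_iff₀ (by positivity)]
          have : (n : ℝ) ^ 1 ≤ n ^ 3 := pow_le_pow_right₀ hn (by norm_num)
          nlinarith
        have h3 : 0 < 1 / (n : ℝ) ^ 4 := by positivity
        nlinarith) (b - 1)
    rw [show b - 1 + 1 = b by omega] at this
    beta_reduce
    rw [Z_eq hd0 h1]
    refine le_trans (le_of_eq ?_) (this.trans (le_of_eq ?_))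
    · congr 1
      ring
    · unfold H
      ring
  refine a.neg.congr fun b h1 h2 => ?_
  ring

/-- a crude uniform bound for the second power sum -/
lemma Z2_le {d b : ℕ} (hd0 : 1 ≤ d) (h1 : d < b) : Z d 2 b ≤ 2 := by
  have key : ∀ m : ℕ, ∑ i ∈ Finset.range (m + 1), 1 / (((i + 1 : ℕ) : ℝ)) ^ 2
      ≤ 2 - 1 / ((m : ℝ) + 1) := by
    intro m
    induction m with
    | zero => norm_num
    | succ m ih =>
      rw [Finset.sum_range_succ]
      push_cast at *
      have : 1 / ((m : ℝ) + 1 + 1) ^ 2 ≤ 1 / ((m : ℝ) + 1) - 1 / ((m : ℝ) + 1 + 1) := by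
        have e : 1 / ((m : ℝ) + 1) - 1 / ((m : ℝ) + 1 + 1) = 1 / ((m + 1) * (m + 1 + 1)) := by
          field_simp; ring
        rw [e]
        gcongr
        nlinarith
      linarith
  have h := key (b - 2)
  rw [show b - 2 + 1 = b - 1 by omega] at h
  rw [Z_eq hd0 h1]
  have : 0 ≤ 1 / (((b - 2 : ℕ) : ℝ) + 1) := by positivity
  have : 0 ≤ 1 / (d : ℝ) ^ 2 := by positivity
  linarith

lemma N0_DFF {d : ℕ} (hd0 : 1 ≤ d) : BO d 5 (fun b => N0 b d (D b d (FF b d))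
    - ((-H b * Z d 2 b + 2 * d * H b ^ 2 * Z d 3 b - 3 * d ^ 2 * H b ^ 3 * Z d 4 b) * v d 1 b
      + (H b ^ 2 * Z d 3 b - 3 * d * H b ^ 3 * Z d 4 b) * v d 2 b
      - H b ^ 3 * Z d 4 b * v d 3 b)) := by
  have hd1 : (1 : ℝ) ≤ d := by exact_mod_cast hd0
  refine ⟨(2 * d + 4) * (10 * ((d : ℝ) + 1) ^ 4), fun b h1 h2 => ?_⟩
  have hH := H_pos h2
  have hl : ∀ n ∈ NZ b d, Lp (5 * ((d : ℝ) + 1) ^ 4 * H b ^ 4 * (1 / (n : ℝ) ^ 2))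
      (fun x => 1 / ((n : ℝ) + (d + x) * H b)
      - ∑ j ∈ Finset.range 4, (-1) ^ j * ((d + x) * H b) ^ j / (n : ℝ) ^ (j + 1)) := by
    intro n hn
    have hu : 1 ≤ (n : ℝ) := by exact_mod_cast (NZ_mem hn).2.1
    refine (Lp_rem hu hH.le (H_le h2) (by linarith) 4 (by norm_num)).mono (le_of_eq ?_)
    norm_num
    ring
  have hs := (Lp.sum (NZ b d) hl)
  have hs' : Lp (10 * ((d : ℝ) + 1) ^ 4 * H b ^ 4) (fun x => D b d (FF b d) x
      - ((Z d 1 b - d * H b * Z d 2 b + d ^ 2 * H b ^ 2 * Z d 3 b - d ^ 3 * H b ^ 3 * Z d 4 b)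
        + (-H b * Z d 2 b + 2 * d * H b ^ 2 * Z d 3 b - 3 * d ^ 2 * H b ^ 3 * Z d 4 b) * x
      + (H b ^ 2 * Z d 3 b - 3 * d * H b ^ 3 * Z d 4 b) * x ^ 2 + (- H b ^ 3 * Z d 4 b) * x ^ 3
      + 0 * x ^ 4)) := by
    have e : (fun x => D b d (FF b d) x
      - ((Z d 1 b - d * H b * Z d 2 b + d ^ 2 * H b ^ 2 * Z d 3 b - d ^ 3 * H b ^ 3 * Z d 4 b)
        + (-H b * Z d 2 b + 2 * d * H b ^ 2 * Z d 3 b - 3 * d ^ 2 * H b ^ 3 * Z d 4 b) * x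
      + (H b ^ 2 * Z d 3 b - 3 * d * H b ^ 3 * Z d 4 b) * x ^ 2 + (- H b ^ 3 * Z d 4 b) * x ^ 3
      + 0 * x ^ 4)) = fun x => ∑ n ∈ NZ b d, (1 / ((n : ℝ) + (d + x) * H b)
      - ∑ j ∈ Finset.range 4, (-1) ^ j * ((d + x) * H b) ^ j / (n : ℝ) ^ (j + 1)) := by
      funext x
      have e1 : D b d (FF b d) x = ∑ n ∈ NZ b d, 1 / ((n : ℝ) + (d + x) * H b) := by
        unfold D FF
        refine Finset.sum_congr rfl fun a _ => ?_
        unfold H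
        rw [mul_one_div]
      rw [e1]
      unfold Z
      rw [Finset.sum_sub_distrib]
      congr 1
      simp only [Finset.sum_range_succ, Finset.sum_range_zero,
        Finset.mul_sum, Finset.sum_mul, zero_add, zero_mul, add_zero, ← Finset.sum_add_distrib,
        ← Finset.sum_sub_distrib]
      refine Finset.sum_congr rfl fun a _ => ?_
      ring
    rw [e]
    refine hs.mono ?_
    rw [← Finset.mul_sum]
    have := Z2_le hd0 h1
    unfold Z at this
    calc _ ≤ 5 * ((d : ℝ) + 1) ^ 4 * H b ^ 4 * 2 := by gcongr
      _ = _ := by ring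
  have := (Fn0 h2 h1).expand (N0_lip h2 h1) _ _ _ _ _ hs'
  have q' : v d 1 b = N0 b d (fun x => x) := by simp [v]
  rw [← q'] at this
  beta_reduce
  refine le_trans (le_of_eq ?_) (this.trans (le_of_eq ?_))
  · congr 1
    unfold v
    ring
  · unfold H
    ring

noncomputable def Y (d s b : ℕ) : ℝ :=
  H b * ∑ a ∈ (Finset.range b).erase d, ∑ n ∈ NZ b d, 1 / ((n : ℝ) + a * H b) ^ s

lemma inv_le_aux {b n : ℕ} (h2 : 2 ≤ b) (hn : 1 ≤ n) (a : ℕ) :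
    1 ≤ (n : ℝ) + a * H b ∧ 1 / ((n : ℝ) + a * H b) ^ 2 ≤ 1 / (n : ℝ) ^ 2 := by
  have hH := H_pos h2
  have hu : 1 ≤ (n : ℝ) := by exact_mod_cast hn
  have : 0 ≤ (a : ℝ) * H b := by positivity
  refine ⟨by linarith, ?_⟩
  gcongr
  linarith

lemma N1_PFF {d : ℕ} (hd0 : 1 ≤ d) : BO d 6 (fun b => N1 b d (P b d (FF b d))
    - (-H b * Y d 2 b * w d 1 b + H b ^ 2 * Y d 3 b * w d 2 b)) := by
  refine ⟨(8 * d + 18) * 8, fun b h1 h2 => ?_⟩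
  have hH := H_pos h2
  have hl : ∀ a ∈ (Finset.range b).erase d, ∀ n ∈ NZ b d, Lp (4 * H b ^ 3 * (1 / (n : ℝ) ^ 2))
      (fun x => 1 / (((n : ℝ) + a * H b) + (0 + x) * H b)
      - ∑ j ∈ Finset.range 3, (-1) ^ j * ((0 + x) * H b) ^ j / ((n : ℝ) + a * H b) ^ (j + 1)) := by
    intro a _ n hn
    obtain ⟨hu, hu'⟩ := inv_le_aux h2 (NZ_mem hn).2.1 a
    refine (Lp_rem hu hH.le (H_le h2) le_rfl 3 (by norm_num)).mono ?_
    rw [div_eq_mul_one_div]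
    norm_num only [zero_add, one_pow, mul_one, Nat.cast_ofNat]
    gcongr
  have hs := (Lp.sum ((Finset.range b).erase d) (fun a ha => Lp.sum (NZ b d) (hl a ha))).mul_left (H b)
  have hs' : Lp (8 * H b ^ 3) (fun x => P b d (FF b d) x - (Y d 1 b + (-H b * Y d 2 b) * x
      + (H b ^ 2 * Y d 3 b) * x ^ 2 + 0 * x ^ 3 + 0 * x ^ 4)) := by
    have e : (fun x => P b d (FF b d) x - (Y d 1 b + (-H b * Y d 2 b) * x
      + (H b ^ 2 * Y d 3 b) * x ^ 2 + 0 * x ^ 3 + 0 * x ^ 4))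
      = fun x => H b * ∑ a ∈ (Finset.range b).erase d, ∑ n ∈ NZ b d,
        (1 / (((n : ℝ) + a * H b) + (0 + x) * H b)
      - ∑ j ∈ Finset.range 3, (-1) ^ j * ((0 + x) * H b) ^ j / ((n : ℝ) + a * H b) ^ (j + 1)) := by
      funext x
      have e1 : P b d (FF b d) x = H b * ∑ a ∈ (Finset.range b).erase d, ∑ n ∈ NZ b d,
          1 / (((n : ℝ) + a * H b) + (0 + x) * H b) := by
        unfold P FF
        rw [show (1 : ℝ) / b = H b from rfl]
        congr 1
        refine Finset.sum_congr rfl fun a _ => Finset.sum_congr rfl fun n _ => ?_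
        congr 1
        unfold H
        ring
      rw [e1]
      unfold Y
      simp only [Finset.sum_sub_distrib]
      rw [mul_sub]
      congr 1
      simp only [Finset.sum_range_succ, Finset.sum_range_zero,
        Finset.mul_sum, Finset.sum_mul, zero_add, zero_mul, add_zero, ← Finset.sum_add_distrib]
      refine Finset.sum_congr rfl fun a _ => Finset.sum_congr rfl fun n _ => ?_
      ring
    rw [e]
    refine hs.mono ?_
    rw [abs_of_pos hH, Finset.sum_const, nsmul_eq_mul, card_erase h1, ← Finset.mul_sum]
    have hz := Z2_le hd0 h1
    unfold Z at hz
    have hb : (2 : ℝ) ≤ b := by exact_mod_cast h2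
    have hc : H b * (b - 1) ≤ 1 := by nlinarith [bH h2]
    have hc0 : 0 ≤ H b * (b - 1) := mul_nonneg hH.le (by linarith)
    calc _ = (H b * (b - 1)) * (4 * H b ^ 3 * ∑ n ∈ NZ b d, 1 / (n : ℝ) ^ 2) := by ring
      _ ≤ 1 * (4 * H b ^ 3 * 2) := by gcongr
      _ = _ := by ring
  have := (Fn1 h2 h1).expand (N1_lip h2 h1) _ _ _ _ _ hs'
  have q' : w d 1 b = N1 b d (fun x => x) := by simp [w]
  rw [← q'] at this
  beta_reduce
  refine le_trans (le_of_eq ?_) (this.trans (le_of_eq ?_))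
  · congr 1
    unfold w
    ring
  · unfold H
    ring

lemma Y3_b {d : ℕ} (hd0 : 1 ≤ d) : BO d 0 (Y d 3) := by
  refine ⟨2, fun b h1 h2 => ?_⟩
  have hH := H_pos h2
  unfold Y
  rw [abs_of_nonneg (by positivity)]
  have : ∑ a ∈ (Finset.range b).erase d, ∑ n ∈ NZ b d, 1 / ((n : ℝ) + a * H b) ^ 3
      ≤ ∑ a ∈ (Finset.range b).erase d, (2 : ℝ) := by
    refine Finset.sum_le_sum fun a _ => le_trans ?_ (Z2_le hd0 h1)
    refine Finset.sum_le_sum fun n hn => ?_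
    obtain ⟨hu, hu'⟩ := inv_le_aux h2 (NZ_mem hn).2.1 a
    refine le_trans ?_ hu'
    gcongr
    norm_num
  rw [Finset.sum_const, nsmul_eq_mul, card_erase h1] at this
  have hb := bH h2
  simp only [pow_zero, mul_one] at *
  nlinarith

end Irw

namespace Irw

lemma tele_nat (G : ℕ → ℝ) (m : ℕ) :
    ∑ i ∈ Finset.range m, (G (i + 1) - G (i + 1 + 1)) = G 1 - G (m + 1) := by
  induction m with
  | zero => simp
  | succ m ih => rw [Finset.sum_range_succ, ih]; ring

lemma NZ_card_le (b d : ℕ) : ((NZ b d).card : ℝ) ≤ b := by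
  have h1 : (NZ b d).card ≤ ((Finset.range b).erase 0).card := Finset.card_erase_le
  have h2 : ((Finset.range b).erase 0).card ≤ (Finset.range b).card := Finset.card_erase_le
  rw [Finset.card_range] at h2
  exact_mod_cast h1.trans h2

lemma Y2_b {d : ℕ} (hd0 : 1 ≤ d) : BO d 2 (fun b => Y d 2 b
    - ((1 - H b) - (1 / (d : ℝ) - 1 / (d + 1))
      + H b / 2 * (1 - 1 / (d : ℝ) ^ 2 + 1 / ((d : ℝ) + 1) ^ 2)
      - H b * (zetaR 2 - 1 / (d : ℝ) ^ 2))) := by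
  have hd1 : (1 : ℝ) ≤ d := by exact_mod_cast hd0
  -- the full sum over all digits
  have a1 : BO d 2 (fun b => ∑ n ∈ NZ b d, (H b * ∑ a ∈ Finset.range b, 1 / ((n : ℝ) + a * H b) ^ 2)
      - ∑ n ∈ NZ b d, ((1 / (n : ℝ) + H b / (2 * (n : ℝ) ^ 2) + H b ^ 2 / (6 * (n : ℝ) ^ 3))
      - (1 / ((n : ℝ) + 1) + H b / (2 * ((n : ℝ) + 1) ^ 2) + H b ^ 2 / (6 * ((n : ℝ) + 1) ^ 3)))) := by
    refine BO.mono (j := 3) ⟨1, fun b h1 h2 => ?_⟩ (by norm_num)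
    beta_reduce
    rw [← Finset.sum_sub_distrib]
    refine (Finset.abs_sum_le_sum_abs _ _).trans ?_
    have : ∀ n ∈ NZ b d, |H b * ∑ a ∈ Finset.range b, 1 / ((n : ℝ) + a * H b) ^ 2
      - ((1 / (n : ℝ) + H b / (2 * (n : ℝ) ^ 2) + H b ^ 2 / (6 * (n : ℝ) ^ 3))
      - (1 / ((n : ℝ) + 1) + H b / (2 * ((n : ℝ) + 1) ^ 2) + H b ^ 2 / (6 * ((n : ℝ) + 1) ^ 3)))|
      ≤ b * H b ^ 5 := by
      intro n hn
      have hn1 : (1 : ℝ) ≤ n := by exact_mod_cast (NZ_mem hn).2.1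
      exact tele h2 (fun u => 1 / u ^ 2) (fun u => 1 / u + H b / (2 * u ^ 2) + H b ^ 2 / (6 * u ^ 3))
        (H b ^ 5) (fun u hu => tl2 (H_pos h2) (H_le h2) u hu) n hn1
    refine (Finset.sum_le_sum this).trans ?_
    rw [Finset.sum_const, nsmul_eq_mul]
    have hH := H_pos h2
    calc _ ≤ (b : ℝ) * (b * H b ^ 5) := mul_le_mul_of_nonneg_right (NZ_card_le b d) (by positivity)
      _ = (b * H b) * (b * H b) * H b ^ 3 := by ring
      _ = _ := by rw [bH h2]; ring
  have a2 : BO d 2 (fun b => ∑ n ∈ NZ b d, ((1 / (n : ℝ) + H b / (2 * (n : ℝ) ^ 2) + H b ^ 2 / (6 * (n : ℝ) ^ 3))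
      - (1 / ((n : ℝ) + 1) + H b / (2 * ((n : ℝ) + 1) ^ 2) + H b ^ 2 / (6 * ((n : ℝ) + 1) ^ 3)))
      - ((1 - H b) - (1 / (d : ℝ) - 1 / (d + 1))
      + H b / 2 * (1 - 1 / (d : ℝ) ^ 2 + 1 / ((d : ℝ) + 1) ^ 2))) := by
    refine (BO_p d 2 (fun h => 1 / 6 - h / 2 - h ^ 3 / 6 - (1 / (6 * (d : ℝ) ^ 3)
      - 1 / (6 * ((d : ℝ) + 1) ^ 3))) (by fun_prop)).congr fun b h1 h2 => ?_
    have e := NZ_sum hd0 h1 (fun n : ℕ => (1 / (n : ℝ) + H b / (2 * (n : ℝ) ^ 2) + H b ^ 2 / (6 * (n : ℝ) ^ 3))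
      - (1 / ((n : ℝ) + 1) + H b / (2 * ((n : ℝ) + 1) ^ 2) + H b ^ 2 / (6 * ((n : ℝ) + 1) ^ 3)))
    have t := tele_nat (fun n : ℕ => 1 / (n : ℝ) + H b / (2 * (n : ℝ) ^ 2) + H b ^ 2 / (6 * (n : ℝ) ^ 3)) (b - 1)
    rw [show b - 1 + 1 = b by omega] at t
    push_cast at t e
    rw [e, t]
    have hb : (1 : ℝ) / b = H b := rfl
    have e1 : H b / (2 * (b : ℝ) ^ 2) = H b ^ 3 / 2 := by unfold H; ring
    have e2 : H b ^ 2 / (6 * (b : ℝ) ^ 3) = H b ^ 5 / 6 := by unfold H; ring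
    rw [hb, e1, e2]
    generalize (d : ℝ) + 1 = t
    ring
  -- the omitted digit
  have a3 : BO d 2 (fun b => H b * (∑ n ∈ NZ b d, 1 / ((n : ℝ) + d * H b) ^ 2 - Z d 2 b)) := by
    refine ⟨4 * d, fun b h1 h2 => ?_⟩
    have hH := H_pos h2
    unfold Z
    beta_reduce
    rw [← Finset.sum_sub_distrib, abs_mul, abs_of_pos hH]
    have : ∀ n ∈ NZ b d, |1 / ((n : ℝ) + d * H b) ^ 2 - 1 / (n : ℝ) ^ 2|
        ≤ 2 * d * H b * (1 / (n : ℝ) ^ 2) := by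
      intro n hn
      have hn1 : (1 : ℝ) ≤ n := by exact_mod_cast (NZ_mem hn).2.1
      have hn0 : (0 : ℝ) < n := by linarith
      have ht : 0 ≤ (d : ℝ) * H b := by positivity
      have e : 1 / ((n : ℝ) + d * H b) ^ 2 - 1 / (n : ℝ) ^ 2
        = - ((d * H b * (2 * n + d * H b)) / (n + d * H b) ^ 2 * (1 / (n : ℝ) ^ 2)) := by
        field_simp
        ring
      rw [e, abs_neg, abs_of_nonneg (by positivity)]
      gcongr
      rw [div_le_iff₀ (by positivity)]
      rw [show 2 * (d : ℝ) * H b = 2 * (d * H b) by ring]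
      generalize (d : ℝ) * H b = t at *
      have : 2 * (n : ℝ) + t ≤ 2 * (n + t) ^ 2 := by nlinarith
      nlinarith
    have h3 := (Finset.abs_sum_le_sum_abs _ _).trans (Finset.sum_le_sum this)
    rw [← Finset.mul_sum] at h3
    have hz := Z2_le hd0 h1
    unfold Z at hz
    calc _ ≤ H b * (2 * d * H b * 2) := by
          gcongr
          refine h3.trans ?_
          gcongr
      _ = _ := by ring
  have a4 := (BO_H d 1).mul (Z2_b hd0) (by norm_num : 2 ≤ 1 + 3)
  have a5 := (BO_p d 2 (fun h => - 1 - h / 2) (by fun_prop))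
  refine ((a1.add a2).sub (a3.add (a4.add a5))).congr fun b h1 h2 => ?_
  have e : Y d 2 b = ∑ n ∈ NZ b d, (H b * ∑ a ∈ Finset.range b, 1 / ((n : ℝ) + a * H b) ^ 2)
      - H b * ∑ n ∈ NZ b d, 1 / ((n : ℝ) + d * H b) ^ 2 := by
    unfold Y
    rw [sum_er h1 (fun a => ∑ n ∈ NZ b d, 1 / ((n : ℝ) + a * H b) ^ 2), Finset.sum_comm,
      ← Finset.mul_sum, mul_sub]
  rw [e]
  ring

noncomputable def y2 (d ζ h : ℝ) : ℝ := (1 - h) - (1 / d - 1 / (d + 1))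
      + h / 2 * (1 - 1 / d ^ 2 + 1 / (d + 1) ^ 2) - h * (ζ - 1 / d ^ 2)
noncomputable def z2 (d ζ h : ℝ) : ℝ := ζ - 1 / d ^ 2 - h - h ^ 2 / 2

noncomputable def p1 (d ζ2 ζ3 ζ4 h : ℝ) : ℝ :=
  h * y2 d ζ2 h * ((d + 1 / 2) * (h ^ 3 + 2 * h ^ 4))
  + h * ((-h * z2 d ζ2 h + 2 * d * h ^ 2 * (ζ3 - 1 / d ^ 3) - 3 * d ^ 2 * h ^ 3 * (ζ4 - 1 / d ^ 4))
      * (-((d + 1 / 2) * (h + h ^ 2 - h ^ 4)))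
    + (h ^ 2 * (ζ3 - 1 / d ^ 3) - 3 * d * h ^ 3 * (ζ4 - 1 / d ^ 4)) * (-((d ^ 2 + 2 * d + 5 / 6) * h ^ 2)))

lemma FF_lp (b d : ℕ) : ∃ L, Lp L (FF b d) := by
  refine ⟨∑ n ∈ NZ b d, 1, ?_⟩
  exact Lp.sum (NZ b d) (f := fun n => ff n) (fun n hn => ff_lp (NZ_mem hn).2.1)

lemma N0_DFF' {d : ℕ} (hd0 : 1 ≤ d) : BO d 5 (fun b => N0 b d (D b d (FF b d))
    - ((-H b * z2 d (zetaR 2) (H b) + 2 * d * H b ^ 2 * (zetaR 3 - 1 / (d : ℝ) ^ 3)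
        - 3 * d ^ 2 * H b ^ 3 * (zetaR 4 - 1 / (d : ℝ) ^ 4))
      * (-((d + 1 / 2) * (H b + H b ^ 2 - H b ^ 4)))
    + (H b ^ 2 * (zetaR 3 - 1 / (d : ℝ) ^ 3) - 3 * d * H b ^ 3 * (zetaR 4 - 1 / (d : ℝ) ^ 4))
      * (-((d ^ 2 + 2 * d + 5 / 6) * H b ^ 2)))) := by
  have q2 := ((BO_p d 1 (fun _ => -1) (by fun_prop)).mul (Z2_b hd0) (le_refl 4))
  have q3 := ((BO_p d 2 (fun _ => 2 * (d : ℝ)) (by fun_prop)).mul (Z3_b hd0) (le_refl 4))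
  have q4 := ((BO_p d 3 (fun _ => -(3 * (d : ℝ) ^ 2)) (by fun_prop)).mul (Z4_b hd0) (le_refl 4))
  have q3' := ((BO_p d 2 (fun _ => 1) (by fun_prop)).mul (Z3_b hd0) (by norm_num : 3 ≤ 2 + 2))
  have q4' := ((BO_p d 3 (fun _ => -(3 * (d : ℝ))) (by fun_prop)).mul (Z4_b hd0) (by norm_num : 3 ≤ 3 + 1))
  have t1 := ((q2.add q3).add q4).mul (v_crude d 1) (le_refl 5)
  have t2 := (q3'.add q4').mul (v2_a d) (le_refl 5)
  have r1 := (BO_p d 0 (fun h => -h * z2 d (zetaR 2) h + 2 * d * h ^ 2 * (zetaR 3 - 1 / (d : ℝ) ^ 3)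
        - 3 * d ^ 2 * h ^ 3 * (zetaR 4 - 1 / (d : ℝ) ^ 4)) (by unfold z2; fun_prop)).mul (v1_b d) (le_refl 5)
  have r2 := (BO_p d 2 (fun h => (zetaR 3 - 1 / (d : ℝ) ^ 3)
        - 3 * d * h * (zetaR 4 - 1 / (d : ℝ) ^ 4)) (by fun_prop)).mul (v2_b d) (by norm_num : 5 ≤ 2 + 4)
  have v3a : BO d 2 (v d 3) := (((v3_b d).mono (by norm_num : 2 ≤ 3)).sub
    (BO_p d 2 (fun _ => (d : ℝ) + 1 / 2) (by fun_prop))).congr fun b _ _ => by ring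
  have Z4a : BO d 0 (Z d 4) := (((Z4_b hd0).mono (by norm_num : 0 ≤ 1)).add
    (BO_c d (zetaR 4 - 1 / (d : ℝ) ^ 4))).congr fun b _ _ => by ring
  have r3 := ((BO_H d 3).mul Z4a (le_refl 3)).mul v3a (le_refl 5)
  refine (((N0_DFF hd0).add (t1.add t2)).add ((r1.add r2).sub r3)).congr fun b h1 h2 => ?_
  unfold z2
  ring

lemma N1_FF {d : ℕ} (hd0 : 1 ≤ d) : BO d 6 (fun b => N1 b d (FF b d)
    - p1 d (zetaR 2) (zetaR 3) (zetaR 4) (H b)) := by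
  have t1 := (((BO_p d 1 (fun _ => -1) (by fun_prop)).mul (Y2_b hd0) (le_refl 3)).mul (w_crude d 1) (le_refl 6))
  have t2 := ((BO_p d 1 (fun h => - y2 d (zetaR 2) h) (by unfold y2; fun_prop)).mul (w1_b d) (le_refl 6))
  have t3 := ((BO_H d 2).mul (Y3_b hd0) (le_refl 2)).mul (w2_b d) (le_refl 6)
  have t4 := (BO_H d 1).mul (N0_DFF' hd0) (le_refl 6)
  refine (((N1_PFF hd0).add t4).add ((t1.add t2).add t3)).congr fun b h1 h2 => ?_
  obtain ⟨L, hL⟩ := FF_lp b d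
  rw [N1_rec h2 h1 hL, show (1 : ℝ) / b = H b from rfl]
  unfold p1 y2
  ring

lemma int_ff {n : ℕ} (hn : 1 ≤ n) : ∫ x in (0 : ℝ)..1, ff n x = Real.log (n + 1) - Real.log n := by
  have hn0 : (0 : ℝ) < n := by exact_mod_cast hn
  unfold ff
  rw [intervalIntegral.integral_comp_add_left (fun x : ℝ => 1 / x) (n : ℝ), add_zero,
    integral_one_div_of_pos hn0 (by positivity), Real.log_div (by positivity) (by positivity)]

lemma main_eq {b d : ℕ} (hd0 : 1 ≤ d) (h1 : d < b) (h2 : 2 ≤ b) :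
    irwinSum b d 1 = b * Real.log b + N1 b d (FF b d) + N0 b d (ff d) := by
  rw [irwin_eq h2 hd0 h1]
  unfold N0 N1
  have e : ∫ x in (0 : ℝ)..1, FF b d x = ∑ n ∈ NZ b d, (Real.log ((n : ℝ) + 1) - Real.log n) := by
    have : ∀ x, FF b d x = ∑ n ∈ NZ b d, ff n x := fun x => rfl
    simp only [this]
    rw [intervalIntegral.integral_finsetSum (fun n hn => (ff_lp (NZ_mem hn).2.1).ii)]
    exact Finset.sum_congr rfl fun n hn => int_ff (NZ_mem hn).2.1
  have t := tele_nat (fun n : ℕ => - Real.log n) (b - 1)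
  rw [show b - 1 + 1 = b by omega] at t
  have e2 := NZ_sum hd0 h1 (fun n : ℕ => Real.log ((n : ℝ) + 1) - Real.log n)
  have e3 : ∑ i ∈ Finset.range (b - 1), (Real.log (((i + 1 : ℕ) : ℝ) + 1) - Real.log ((i + 1 : ℕ) : ℝ))
      = Real.log b := by
    rw [Nat.cast_one, Real.log_one] at t
    rw [show Real.log b = -0 - -Real.log b by ring, ← t]
    refine Finset.sum_congr rfl fun i _ => ?_
    push_cast
    ring
  rw [e, e2, e3, int_ff hd0]
  ring

end Irw

namespace Irw

/-- the remainder of the final polynomial, divided by the sixth power -/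
noncomputable def gq (d ζ2 ζ3 ζ4 h : ℝ) : ℝ :=
  (d + 1 / 2) * ((-3 / d ^ 2 - (1 / 2 * (1 / d ^ 2 - 1 / (d + 1) ^ 2) - 1 / d ^ 2))
    - (1 / 6 * (1 / d ^ 3 - 1 / (d + 1) ^ 3) + 2 / d ^ 2) * h - (-3 / d ^ 2) * h ^ 2)
  + 2 * (d + 1 / 2) * (-1 + 1 / 2 * (1 - 1 / d ^ 2 + 1 / (d + 1) ^ 2) - (ζ2 - 1 / d ^ 2))
  - (d + 1 / 2) * ((1 / 2 - 3 * d ^ 2 * (ζ4 - 1 / d ^ 4) + (ζ2 - 1 / d ^ 2))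
    - (1 + 2 * d * (ζ3 - 1 / d ^ 3)) * h - (1 / 2 - 3 * d ^ 2 * (ζ4 - 1 / d ^ 4)) * h ^ 2)
  + 3 * d * (d ^ 2 + 2 * d + 5 / 6) * (ζ4 - 1 / d ^ 4)

lemma final_alg (d ζ2 ζ3 ζ4 h : ℝ) (hd : 0 < d) :
    p0 d h + p1 d ζ2 ζ3 ζ4 h = (d + 1 / 2) / d ^ 2 * h
      + -(9 * d ^ 2 + 8 * d + 2) / (6 * d ^ 3 * (d + 1)) * h ^ 2
      + ((d + 1 / 2) * ζ2 + (d + 1 / 2) * (2 * d ^ 3 + 4 * d ^ 2 + 4 * d + 1)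
        / (2 * d ^ 4 * (d + 1) ^ 2)) * h ^ 3
      + (-(2 * d + 1) * d * ζ3 + (d + 1 / 2) * ζ2
      - (60 * d ^ 7 + 180 * d ^ 6 + 350 * d ^ 5 + 585 * d ^ 4
          + 597 * d ^ 3 + 331 * d ^ 2 + 96 * d + 12) / (60 * d ^ 5 * (d + 1) ^ 3)) * h ^ 4
      + (3 * (d + 1 / 2) * d ^ 2 * ζ4 - (3 * d ^ 2 + 3 * d + 5 / 6) * ζ3 - (d + 1 / 2) * ζ2
      - (12 * d ^ 8 - 24 * d ^ 7 - 216 * d ^ 6 - 387 * d ^ 5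
          - 339 * d ^ 4 - 186 * d ^ 3 - 72 * d ^ 2 - 18 * d - 2)
        / (12 * d ^ 6 * (d + 1) ^ 3)) * h ^ 5
      + h ^ 6 * gq d ζ2 ζ3 ζ4 h := by
  unfold p0 p1 gq ep s2 s3 s4 y2 z2
  field_simp
  ring

end Irw

theorem irwin_d_one_asymptotic (d : ℕ) (hd : 1 ≤ d) (a1 a2 a3 a4 a5 : ℝ)
    (h1 : a1 = ((d : ℝ) + 1 / 2) / (d : ℝ) ^ 2)
    (h2 : a2 = -(9 * (d : ℝ) ^ 2 + 8 * d + 2) / (6 * (d : ℝ) ^ 3 * ((d : ℝ) + 1)))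
    (h3 : a3 = ((d : ℝ) + 1 / 2) * zetaR 2
      + ((d : ℝ) + 1 / 2) * (2 * (d : ℝ) ^ 3 + 4 * (d : ℝ) ^ 2 + 4 * d + 1)
        / (2 * (d : ℝ) ^ 4 * ((d : ℝ) + 1) ^ 2))
    (h4 : a4 = -(2 * (d : ℝ) + 1) * d * zetaR 3 + ((d : ℝ) + 1 / 2) * zetaR 2
      - (60 * (d : ℝ) ^ 7 + 180 * (d : ℝ) ^ 6 + 350 * (d : ℝ) ^ 5 + 585 * (d : ℝ) ^ 4
          + 597 * (d : ℝ) ^ 3 + 331 * (d : ℝ) ^ 2 + 96 * d + 12)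
        / (60 * (d : ℝ) ^ 5 * ((d : ℝ) + 1) ^ 3))
    (h5 : a5 = 3 * ((d : ℝ) + 1 / 2) * (d : ℝ) ^ 2 * zetaR 4
      - (3 * (d : ℝ) ^ 2 + 3 * d + 5 / 6) * zetaR 3 - ((d : ℝ) + 1 / 2) * zetaR 2
      - (12 * (d : ℝ) ^ 8 - 24 * (d : ℝ) ^ 7 - 216 * (d : ℝ) ^ 6 - 387 * (d : ℝ) ^ 5
          - 339 * (d : ℝ) ^ 4 - 186 * (d : ℝ) ^ 3 - 72 * (d : ℝ) ^ 2 - 18 * d - 2)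
        / (12 * (d : ℝ) ^ 6 * ((d : ℝ) + 1) ^ 3)) :
    (fun b : ℕ => irwinSum b d 1 -
      ((b : ℝ) * Real.log b
        + a1 / b + a2 / (b : ℝ) ^ 2 + a3 / (b : ℝ) ^ 3 + a4 / (b : ℝ) ^ 4 + a5 / (b : ℝ) ^ 5))
      =O[atTop] fun b : ℕ => ((b : ℝ) ^ 6)⁻¹ := by
  have hdp : (0 : ℝ) < d := by exact_mod_cast hd
  obtain ⟨C, hC⟩ := ((Irw.N0_ff hd).add (Irw.N1_FF hd)).add
    (Irw.BO_p d 6 (Irw.gq d (zetaR 2) (zetaR 3) (zetaR 4)) (by unfold Irw.gq; fun_prop))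
  refine IsBigO.of_bound C ?_
  filter_upwards [eventually_gt_atTop d, eventually_ge_atTop 2] with b hb1 hb2
  have h := hC b hb1 hb2
  have hf := Irw.final_alg d (zetaR 2) (zetaR 3) (zetaR 4) (Irw.H b) hdp
  rw [← h1, ← h2, ← h3, ← h4, ← h5] at hf
  have hH : ∀ (a : ℝ) (k : ℕ), a / (b : ℝ) ^ k = a * Irw.H b ^ k := by
    intro a k
    unfold Irw.H
    rw [div_pow, one_pow, mul_one_div]
  have hH1 : a1 / (b : ℝ) = a1 * Irw.H b := by simpa using hH a1 1
  have e6 : ((b : ℝ) ^ 6)⁻¹ = Irw.H b ^ 6 := by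
    unfold Irw.H
    rw [div_pow, one_pow, one_div]
  rw [Irw.main_eq hd hb1 hb2, hH1, hH, hH, hH, hH, e6, Real.norm_eq_abs, Real.norm_eq_abs,
    abs_of_pos (pow_pos (Irw.H_pos hb2) 6)]
  refine le_trans (le_of_eq ?_) h
  congr 1
  linear_combination hf
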